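/- arXiv:2212.07974 — 2 statements merged into one kernel-verified Lean document; each statement's English description precedes it below -/
import Mathlib

section
/- For every α ∈ (0,1) and every β ≥ α, the function x ↦ φ(-α, β, -x) is log-concave on [0,∞). -/
/-- The Wright function `φ(ρ, β, x) = ∑ x^n / (n! Γ(β + ρ n))`. -/
noncomputable def wright (ρ β x : ℝ) : ℝ :=
  ∑' n : ℕ, x ^ n / ((n.factorial : ℝ) * Real.Gamma (β + ρ * n))

/-- `f` is log-concave on the set `S`. -/
def LogConcaveOn' (f : ℝ → ℝ) (S : Set ℝ) : Prop :=
  ∀ x ∈ S, ∀ y ∈ S, ∀ t ∈ Set.Icc (0 : ℝ) 1,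
    f ((1 - t) * x + t * y) ≥ f x ^ (1 - t) * f y ^ t

/-! The backward differences `U m n = ascPochhammerDiff α β m n` of rising factorials satisfy
`U (m + 1) n = (β + m - α n) * U m n + α n * U m (n - 1)`. On the support `n ≤ m` this recurrence
preserves nonnegativity and, because both weights are at least `α` where it matters,
log-concavity in `n`. Euler's limit `(s)ₘ₊₁ / (m ^ s * m!) → 1 / Γ(s)` turns
`U (m + 1) n / (m ^ β * m!)` into `φ(-α, β, -x)` as `n / m ^ α → x`, by dominated convergence, so
the discrete log-concavity passes to the limit.
-/

open Filter Finset Topology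
open scoped Nat

theorem logConcaveOn'_of_lt {f : ℝ → ℝ} {S : Set ℝ} (hf : ∀ x ∈ S, 0 ≤ f x)
    (h : ∀ x ∈ S, ∀ y ∈ S, x < y → ∀ t ∈ Set.Ioo (0 : ℝ) 1,
      f x ^ (1 - t) * f y ^ t ≤ f ((1 - t) * x + t * y)) :
    LogConcaveOn' f S := by
  rintro x hx y hy t ⟨ht₀, ht₁⟩
  rcases ht₀.eq_or_lt with rfl | ht₀
  · simp
  rcases ht₁.eq_or_lt with rfl | ht₁
  · simp
  rcases lt_trichotomy x y with hxy | rfl | hyx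
  · exact h x hx y hy hxy t ⟨ht₀, ht₁⟩
  · rw [← Real.rpow_add_of_nonneg (hf x hx) (by linarith) ht₀.le, ← add_mul]
    simp
  · have := h y hy x hx hyx (1 - t) ⟨by linarith, by linarith⟩
    rwa [sub_sub_cancel, mul_comm, add_comm] at this

section DiscreteConcavity

theorem chord_le_of_add_le_two_mul {R : Type*} [CommRing R] [LinearOrder R]
    [IsStrictOrderedRing R] {L : ℕ → R} {i k j : ℕ} (hik : i ≤ k) (hkj : k < j)
    (hL : ∀ n, i ≤ n → n + 2 ≤ j → L n + L (n + 2) ≤ 2 * L (n + 1)) :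
    ((j : R) - k) * L i + ((k : R) - i) * L j ≤ ((j : R) - i) * L k := by
  have anti : AntitoneOn (fun n => L (n + 1) - L n) (Set.Ico i j) := by
    refine antitoneOn_of_add_one_le Set.ordConnected_Ico fun n _ hn hn' => ?_
    linarith [hL n hn.1 hn'.2]
  have right : L j - L k ≤ ((j : R) - k) * (L (k + 1) - L k) := by
    have := sum_le_card_nsmul (Ico k j) (fun n => L (n + 1) - L n) (L (k + 1) - L k) fun n hn => by
      rw [mem_Ico] at hn
      exact anti ⟨hik, hkj⟩ ⟨hik.trans hn.1, hn.2⟩ hn.1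
    rwa [sum_Ico_sub L hkj.le, Nat.card_Ico, nsmul_eq_mul, Nat.cast_sub hkj.le] at this
  have left : ((k : R) - i) * (L (k + 1) - L k) ≤ L k - L i := by
    have := card_nsmul_le_sum (Ico i k) (fun n => L (n + 1) - L n) (L (k + 1) - L k) fun n hn => by
      rw [mem_Ico] at hn
      exact anti ⟨hn.1, hn.2.trans hkj⟩ ⟨hik, hkj⟩ hn.2.le
    rwa [sum_Ico_sub L hik, Nat.card_Ico, nsmul_eq_mul, Nat.cast_sub hik] at this
  have hik' : (0 : R) ≤ k - i := sub_nonneg.2 (Nat.cast_le.2 hik)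
  have hkj' : (0 : R) ≤ j - k := sub_nonneg.2 (Nat.cast_le.2 hkj.le)
  linarith [mul_le_mul_of_nonneg_left right hik', mul_le_mul_of_nonneg_left left hkj']

theorem rpow_mul_rpow_le_of_mul_le_sq {W : ℕ → ℝ} {i k j : ℕ} (hik : i ≤ k) (hkj : k ≤ j)
    (hij : i < j) (hi : 0 ≤ W i) (hpos : ∀ n, i < n → n ≤ j → 0 < W n)
    (hW : ∀ n, W n * W (n + 2) ≤ W (n + 1) ^ 2) :
    W i ^ (((j : ℝ) - k) / (j - i)) * W j ^ (((k : ℝ) - i) / (j - i)) ≤ W k := by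
  have hij' : (0 : ℝ) < j - i := sub_pos.2 (Nat.cast_lt.2 hij)
  rcases hkj.eq_or_lt with rfl | hkj
  · simp [div_self hij'.ne']
  have hkj' : (0 : ℝ) < j - k := sub_pos.2 (Nat.cast_lt.2 hkj)
  have hk : 0 ≤ W k := by
    rcases hik.eq_or_lt with rfl | hik
    exacts [hi, (hpos k hik hkj.le).le]
  rcases hi.eq_or_lt with hi | hi
  · rwa [← hi, Real.zero_rpow (div_pos hkj' hij').ne', zero_mul]
  have hpos : ∀ n, i ≤ n → n ≤ j → 0 < W n := fun n hn hnj => by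
    rcases hn.eq_or_lt with rfl | hn
    exacts [hi, hpos n hn hnj]
  have chord := chord_le_of_add_le_two_mul (L := fun n => Real.log (W n)) hik hkj fun n hn hnj => by
    have hn₀ := hpos n hn (by lia)
    have hn₂ := hpos (n + 2) (by lia) hnj
    simpa [Real.log_mul hn₀.ne' hn₂.ne', Real.log_pow] using
      Real.log_le_log (mul_pos hn₀ hn₂) (hW n)
  have hj := hpos j hij.le le_rfl
  have hk := hpos k hik hkj.le
  rw [Real.rpow_def_of_pos hi, Real.rpow_def_of_pos hj, ← Real.exp_add, ← Real.le_log_iff_exp_le hk,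
    mul_div_assoc', mul_div_assoc', ← add_div, div_le_iff₀ hij']
  linarith

end DiscreteConcavity

section AscPochhammerDiff

theorem fwdDiff_iter_add_const_mul {R : Type*} [CommRing R] (h c : R) (f : R → R) (n : ℕ) (y : R) :
    (fwdDiff h)^[n + 1] (fun z => (z + c) * f z) y =
      (y + c + (n + 1) * h) * (fwdDiff h)^[n + 1] f y + (n + 1) * h * (fwdDiff h)^[n] f y := by
  induction n generalizing y with
  | zero => simp [fwdDiff]; ring
  | succ n ih =>
    simp only [Function.iterate_succ_apply'] at ih ⊢
    rw [fwdDiff, ih, ih]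
    simp only [fwdDiff]
    push_cast
    ring

/-- The `n`-th backward difference with step `α`, at `β`, of the rising factorial
`z ↦ z (z + 1) ⋯ (z + m - 1)`: a finite analogue of `φ(-α, β, -x)`, with `n` in the role of `x`.
The sign `(-1) ^ n` turns the forward differences with step `-α` into backward ones. -/
noncomputable def ascPochhammerDiff (α β : ℝ) (m n : ℕ) : ℝ :=
  (-1) ^ n * (fwdDiff (-α))^[n] (fun z => (ascPochhammer ℝ m).eval z) β

theorem ascPochhammerDiff_eq_sum (α β : ℝ) (m n : ℕ) :
    ascPochhammerDiff α β m n = ∑ i ∈ range (n + 1),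
      (-1) ^ i * n.choose i * (ascPochhammer ℝ m).eval (β - α * i) := by
  rw [ascPochhammerDiff, fwdDiff_iter_eq_sum_shift, mul_sum]
  refine sum_congr rfl fun i hi => ?_
  have hsign : (-1 : ℝ) ^ n * (-1) ^ (n - i) = (-1) ^ i := by
    rw [← Nat.add_sub_cancel' (mem_range_succ_iff.1 hi), pow_add, mul_assoc]
    simp [← mul_pow]
  rw [← hsign, zsmul_eq_mul, nsmul_eq_mul]
  push_cast
  ring_nf

theorem ascPochhammerDiff_succ_zero (α β : ℝ) (m : ℕ) :
    ascPochhammerDiff α β (m + 1) 0 = (β + m) * ascPochhammerDiff α β m 0 := by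
  simp [ascPochhammerDiff, ascPochhammer_succ_eval, mul_comm]

theorem ascPochhammerDiff_succ_succ (α β : ℝ) (m n : ℕ) :
    ascPochhammerDiff α β (m + 1) (n + 1) =
      (β + m - α * (n + 1)) * ascPochhammerDiff α β m (n + 1) +
        α * (n + 1) * ascPochhammerDiff α β m n := by
  simp only [ascPochhammerDiff, ascPochhammer_succ_eval, mul_comm _ (_ + (m : ℝ)),
    fwdDiff_iter_add_const_mul]
  ring

theorem ascPochhammerDiff_of_lt (α β : ℝ) {m n : ℕ} (h : m < n) :
    ascPochhammerDiff α β m n = 0 := by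
  induction m generalizing n with
  | zero =>
    obtain ⟨n, rfl⟩ := Nat.exists_eq_succ_of_ne_zero h.ne'
    have hzero : (fwdDiff (-α)) (fun _ : ℝ => (0 : ℝ)) = fun _ => 0 := fwdDiff_const _ 0
    simp [ascPochhammerDiff, Function.iterate_fixed hzero]
  | succ m ih =>
    obtain ⟨n, rfl⟩ := Nat.exists_eq_succ_of_ne_zero (Nat.ne_zero_of_lt h)
    rw [ascPochhammerDiff_succ_succ, ih (by lia), ih (by lia)]
    simp

theorem ascPochhammerDiff_nonneg {α β : ℝ} (hα₀ : 0 ≤ α) (hα₁ : α ≤ 1) (hβ : 0 ≤ β) (m n : ℕ) :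
    0 ≤ ascPochhammerDiff α β m n := by
  induction m generalizing n with
  | zero =>
    cases n with
    | zero => simp [ascPochhammerDiff]
    | succ n => exact (ascPochhammerDiff_of_lt α β n.succ_pos).ge
  | succ m ih =>
    cases n with
    | zero =>
      rw [ascPochhammerDiff_succ_zero]
      exact mul_nonneg (by positivity) (ih 0)
    | succ n =>
      rw [ascPochhammerDiff_succ_succ]
      refine add_nonneg ?_ (mul_nonneg (by positivity) (ih n))
      rcases lt_or_ge m (n + 1) with hmn | hnm
      · rw [ascPochhammerDiff_of_lt α β hmn, mul_zero]
      · have hnm : (n : ℝ) + 1 ≤ m := mod_cast hnm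
        exact mul_nonneg (by nlinarith) (ih (n + 1))

theorem ascPochhammerDiff_succ_pos {α β : ℝ} (hα : α ∈ Set.Ioo (0 : ℝ) 1) (hβ : 0 ≤ β) {m n : ℕ}
    (h : n < m) : 0 < ascPochhammerDiff α β m (n + 1) := by
  obtain ⟨hα₀, hα₁⟩ := hα
  induction m generalizing n with
  | zero => lia
  | succ m ih =>
    rw [ascPochhammerDiff_succ_succ]
    rcases (Nat.lt_succ_iff.1 h).eq_or_lt with rfl | hnm
    · have hdiag : 0 < ascPochhammerDiff α β n n := by
        cases n with
        | zero => simp [ascPochhammerDiff]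
        | succ n => exact ih n.lt_succ_self
      rw [ascPochhammerDiff_of_lt α β n.lt_succ_self, mul_zero, zero_add]
      positivity
    · have hnm' : (n : ℝ) + 1 ≤ m := mod_cast hnm
      exact add_pos_of_pos_of_nonneg (mul_pos (by nlinarith) (ih hnm))
        (mul_nonneg (by positivity) (ascPochhammerDiff_nonneg hα₀.le hα₁.le hβ m n))

theorem mul_le_mul_of_mul_le_sq {R : Type*} [CommRing R] [LinearOrder R] [IsStrictOrderedRing R]
    {u₀ u₁ u₂ u₃ : R} (h₁ : 0 < u₁) (h₂ : 0 < u₂) (h₃ : 0 ≤ u₃)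
    (h₀₂ : u₀ * u₂ ≤ u₁ ^ 2) (h₁₃ : u₁ * u₃ ≤ u₂ ^ 2) : u₀ * u₃ ≤ u₁ * u₂ := by
  refine le_of_mul_le_mul_right ?_ (mul_pos h₁ h₂)
  calc u₀ * u₃ * (u₁ * u₂) = u₀ * u₂ * (u₁ * u₃) := by ring
    _ ≤ u₁ ^ 2 * u₂ ^ 2 := mul_le_mul h₀₂ h₁₃ (by positivity) (by positivity)
    _ = u₁ * u₂ * (u₁ * u₂) := by ring

theorem mul_le_sq_of_add_mul_add_sub_mul {R : Type*} [CommRing R] [LinearOrder R]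
    [IsStrictOrderedRing R] {a f g u₀ u₁ u₂ u₃ : R} (ha : 0 ≤ a) (haf : a ≤ f) (hag : a ≤ g)
    (h₀₂ : u₀ * u₂ ≤ u₁ ^ 2) (h₁₃ : u₁ * u₃ ≤ u₂ ^ 2) (h₀₃ : u₀ * u₃ ≤ u₁ * u₂) :
    ((g + a) * u₁ + (f - a) * u₀) * ((g - a) * u₃ + (f + a) * u₂) ≤ (g * u₂ + f * u₁) ^ 2 := by
  rw [← sub_nonneg] at haf hag h₀₂ h₁₃ h₀₃ ⊢
  calc 0 ≤ (g - a) * (g + a) * (u₂ ^ 2 - u₁ * u₃) + (f - a) * (f + a) * (u₁ ^ 2 - u₀ * u₂) +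
        (f - a) * (g - a) * (u₁ * u₂ - u₀ * u₃) + a ^ 2 * (u₁ - u₂) ^ 2 := by
        have : 0 ≤ f + a := by linarith
        have : 0 ≤ g + a := by linarith
        positivity
    _ = _ := by ring

theorem ascPochhammerDiff_mul_le_sq {α β : ℝ} (hα : α ∈ Set.Ioo (0 : ℝ) 1) (hβ₀ : 0 ≤ β)
    (hβ : 2 * α - 1 ≤ β) (m n : ℕ) :
    ascPochhammerDiff α β m n * ascPochhammerDiff α β m (n + 2) ≤
      ascPochhammerDiff α β m (n + 1) ^ 2 := by
  have ⟨hα₀, hα₁⟩ := hα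
  induction m generalizing n with
  | zero =>
    rw [ascPochhammerDiff_of_lt α β (by lia : 0 < n + 2), mul_zero]
    positivity
  | succ m ih =>
    rcases lt_or_ge (m + 1) (n + 2) with hmn | hnm
    · rw [ascPochhammerDiff_of_lt α β hmn, mul_zero]
      positivity
    have hnm' : (n : ℝ) + 1 ≤ m := mod_cast (by lia : n + 1 ≤ m)
    have hg : α ≤ β + m - α * (n + 1) := by nlinarith [n.cast_nonneg (α := ℝ)]
    have hf : α ≤ α * (n + 1) := le_mul_of_one_le_right hα₀.le (by simp)
    have hnonneg := ascPochhammerDiff_nonneg hα₀.le hα₁.le hβ₀ m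
    cases n with
    | zero =>
      -- Column `0` obeys the same recurrence with `0` in place of a column `-1`.
      have step := mul_le_sq_of_add_mul_add_sub_mul (u₀ := 0) hα₀.le hf hg
        (by rw [zero_mul]; positivity) (ih 0)
        (by rw [zero_mul]; exact mul_nonneg (hnonneg 0) (hnonneg 1))
      rw [ascPochhammerDiff_succ_zero, ascPochhammerDiff_succ_succ, ascPochhammerDiff_succ_succ]
      refine (Eq.le ?_).trans (step.trans_eq ?_) <;> push_cast <;> ring
    | succ n =>
      have hpos₁ := ascPochhammerDiff_succ_pos hα hβ₀ (by lia : n < m)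
      have hpos₂ := ascPochhammerDiff_succ_pos hα hβ₀ (by lia : n + 1 < m)
      have step := mul_le_sq_of_add_mul_add_sub_mul hα₀.le hf hg (ih n) (ih (n + 1))
        (mul_le_mul_of_mul_le_sq hpos₁ hpos₂ (hnonneg _) (ih n) (ih (n + 1)))
      simp only [ascPochhammerDiff_succ_succ]
      refine (Eq.le ?_).trans (step.trans_eq ?_) <;> push_cast <;> ring

end AscPochhammerDiff

section InvGammaSeq

theorem inv_GammaSeq_eq (s : ℝ) (m : ℕ) :
    (Real.GammaSeq s m)⁻¹ = (ascPochhammer ℝ (m + 1)).eval s / ((m : ℝ) ^ s * m !) := by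
  have hprod : ∀ n, (ascPochhammer ℝ n).eval s = ∏ j ∈ range n, (s + j) := fun n => by
    induction n with
    | zero => simp
    | succ n ih => rw [ascPochhammer_succ_eval, prod_range_succ, ih]
  rw [Real.GammaSeq, inv_div, hprod]

theorem tendsto_inv_GammaSeq (s : ℝ) :
    Tendsto (fun m => (Real.GammaSeq s m)⁻¹) atTop (𝓝 (Real.Gamma s)⁻¹) := by
  by_cases h : Real.Gamma s = 0
  · obtain ⟨k, rfl⟩ := (Real.Gamma_eq_zero_iff s).1 h
    rw [h, inv_zero]
    refine tendsto_const_nhds.congr' ?_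
    filter_upwards [eventually_ge_atTop k] with m hm
    rw [inv_GammaSeq_eq, ascPochhammer_eval_neg_coe_nat_of_lt (Nat.lt_succ_of_le hm), zero_div]
  · exact (Real.GammaSeq_tendsto_Gamma s).inv₀ h

theorem add_mul_mul_sub_rpow_le {r M d : ℝ} (hr : 0 ≤ r) (hM : 0 < M) (hd : d ≤ M) :
    (M + r * d) * (M - d) ^ r ≤ M * M ^ r := by
  have hlinear : (M + r * d) / M ≤ Real.exp (r * d / M) := by
    rw [add_div, div_self hM.ne', add_comm]
    exact Real.add_one_le_exp _
  have hpower : ((M - d) / M) ^ r ≤ Real.exp (-(r * d / M)) := by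
    calc ((M - d) / M) ^ r ≤ Real.exp (-(d / M)) ^ r := by
          refine Real.rpow_le_rpow (div_nonneg (sub_nonneg.2 hd) hM.le) ?_ hr
          rw [sub_div, div_self hM.ne']
          exact Real.one_sub_le_exp_neg _
      _ = Real.exp (-(r * d / M)) := by rw [← Real.exp_mul]; ring_nf
  have h := mul_le_mul hlinear hpower
    (Real.rpow_nonneg (div_nonneg (sub_nonneg.2 hd) hM.le) r) (Real.exp_pos _).le
  rwa [← Real.exp_add, add_neg_cancel, Real.exp_zero, Real.div_rpow (sub_nonneg.2 hd) hM.le,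
    div_mul_div_comm, div_le_one (by positivity)] at h

theorem ascPochhammer_eval_le {s : ℝ} (hs : 0 ≤ s) {m : ℕ} (hm : 1 ≤ m) :
    (ascPochhammer ℝ (m + 1)).eval s ≤ s * Real.exp s * ((m : ℝ) ^ s * m !) := by
  induction m, hm using Nat.le_induction with
  | base =>
    simpa [ascPochhammer_succ_eval] using mul_le_mul_of_nonneg_left (Real.add_one_le_exp s) hs
  | succ m _ ih =>
    have step := add_mul_mul_sub_rpow_le (M := m + 1) (d := 1) hs (by positivity) (by simp)
    rw [add_sub_cancel_right, mul_one] at step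
    rw [ascPochhammer_succ_eval, Nat.factorial_succ]
    push_cast
    calc _ ≤ s * Real.exp s * ((m : ℝ) ^ s * m !) * (s + (m + 1)) := by
          gcongr
      _ = s * Real.exp s * m ! * ((m + 1 + s) * m ^ s) := by ring
      _ ≤ s * Real.exp s * m ! * ((m + 1) * (m + 1) ^ s) := by gcongr
      _ = _ := by ring

theorem abs_ascPochhammer_eval_neg_le {R : Type*} [CommRing R] [LinearOrder R]
    [IsStrictOrderedRing R] {r : R} {m : ℕ} (h : m ≤ r + 1) :
    |(ascPochhammer R m).eval (-r)| ≤ r ^ m := by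
  induction m with
  | zero => simp
  | succ m ih =>
    push_cast at h
    rw [ascPochhammer_succ_eval, abs_mul, pow_succ]
    have hfactor : |-r + m| ≤ r := abs_le.2 ⟨by linarith, by linarith⟩
    exact mul_le_mul (ih (by linarith)) hfactor (abs_nonneg _) (pow_nonneg (by linarith) m)

theorem abs_ascPochhammer_eval_neg_mul_le {r : ℝ} (hr : 0 ≤ r) (m : ℕ) :
    |(ascPochhammer ℝ (m + 1)).eval (-r)| * (m + 1) ^ r ≤
      r * Real.exp r * (r + 1) ^ r * m ! := by
  rcases le_or_gt (m : ℝ) r with hmr | hrm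
  · calc |(ascPochhammer ℝ (m + 1)).eval (-r)| * (m + 1) ^ r ≤ r ^ (m + 1) * (r + 1) ^ r := by
          gcongr
          exact abs_ascPochhammer_eval_neg_le (by push_cast; linarith)
      _ = r * (r ^ m) * (r + 1) ^ r := by ring
      _ ≤ r * (Real.exp r * m !) * (r + 1) ^ r := by
          gcongr
          rw [← div_le_iff₀ (by positivity)]
          exact Real.pow_div_factorial_le_exp r hr m
      _ = _ := by ring
  · cases m with
    | zero => exact absurd hrm (by simpa using hr)
    | succ m =>
      have ih := abs_ascPochhammer_eval_neg_mul_le hr m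
      have step := add_mul_mul_sub_rpow_le (M := m + 1) (d := -1) hr (by positivity) (by linarith)
      rw [sub_neg_eq_add, mul_neg_one, ← sub_eq_add_neg] at step
      push_cast at hrm ⊢
      rw [ascPochhammer_succ_eval, abs_mul, Nat.factorial_succ]
      push_cast
      rw [abs_of_pos (show 0 < -r + (m + 1) by linarith)]
      calc _ = |(ascPochhammer ℝ (m + 1)).eval (-r)| * ((m + 1 - r) * (m + 1 + 1) ^ r) := by ring
        _ ≤ |(ascPochhammer ℝ (m + 1)).eval (-r)| * ((m + 1) * (m + 1) ^ r) := by gcongr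
        _ ≤ (m + 1) * (r * Real.exp r * (r + 1) ^ r * m !) := by
          linarith [mul_le_mul_of_nonneg_left ih (show (0 : ℝ) ≤ m + 1 by positivity)]
        _ = _ := by ring

theorem abs_inv_GammaSeq_le {s r : ℝ} (hr : 0 ≤ r) (h : -r ≤ s) {m : ℕ} (hm : 1 ≤ m) :
    |(Real.GammaSeq s m)⁻¹| ≤ |s| * Real.exp |s| * (r + 1) ^ r := by
  have hm₀ : (0 : ℝ) < m := Nat.cast_pos.2 hm
  have hden : 0 < (m : ℝ) ^ s * m ! := by positivity
  rw [inv_GammaSeq_eq, abs_div, abs_of_pos hden]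
  rcases le_total 0 s with hs | hs
  · have hnum : 0 ≤ (ascPochhammer ℝ (m + 1)).eval s := by
      rcases hs.eq_or_lt with rfl | hs
      · simp
      · exact (ascPochhammer_pos _ _ hs).le
    rw [div_le_iff₀ hden, abs_of_nonneg hs, abs_of_nonneg hnum]
    refine (ascPochhammer_eval_le hs hm).trans ?_
    exact mul_le_mul_of_nonneg_right
      (le_mul_of_one_le_right (by positivity) (Real.one_le_rpow (le_add_of_nonneg_left hr) hr))
      hden.le
  · obtain ⟨u, rfl⟩ : ∃ u, s = -u := ⟨-s, (neg_neg s).symm⟩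
    have hu : 0 ≤ u := by linarith
    have hur : u ≤ r := by linarith
    rw [abs_neg, abs_of_nonneg hu, Real.rpow_neg hm₀.le, inv_mul_eq_div, div_div_eq_mul_div,
      div_le_iff₀ (by positivity)]
    calc |(ascPochhammer ℝ (m + 1)).eval (-u)| * (m : ℝ) ^ u
        ≤ |(ascPochhammer ℝ (m + 1)).eval (-u)| * ((m : ℝ) + 1) ^ u := by
          gcongr
          linarith
      _ ≤ u * Real.exp u * (u + 1) ^ u * m ! := abs_ascPochhammer_eval_neg_mul_le hu m
      _ ≤ u * Real.exp u * (r + 1) ^ r * m ! := by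
          gcongr ?_ * ?_ * ?_ * ?_
          exact (Real.rpow_le_rpow_of_exponent_le (by linarith) hur).trans' (by gcongr)

end InvGammaSeq

section WrightLimit

theorem summable_pow_div_factorial_rpow {D p : ℝ} (hD : 0 ≤ D) (hp : 0 < p) :
    Summable fun i : ℕ => D ^ i / (i ! : ℝ) ^ p := by
  set E := (2 * D) ^ p⁻¹
  have hE : 0 ≤ E := by positivity
  refine Summable.of_nonneg_of_le (fun i => by positivity) (fun i => ?_)
    (summable_geometric_two.mul_left (Real.exp E ^ p))
  have hfac : (0 : ℝ) < i ! := by positivity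
  have h : (2 * D) ^ i / (i ! : ℝ) ^ p ≤ Real.exp E ^ p := by
    calc (2 * D) ^ i / (i ! : ℝ) ^ p = (E ^ i / i !) ^ p := by
          rw [Real.div_rpow (by positivity) hfac.le, ← Real.rpow_pow_comm hE,
            Real.rpow_inv_rpow (by positivity) hp.ne']
      _ ≤ Real.exp E ^ p := by
          gcongr
          exact Real.pow_div_factorial_le_exp E hE i
  calc D ^ i / (i ! : ℝ) ^ p = (2 * D) ^ i / (i ! : ℝ) ^ p * (1 / 2) ^ i := by
        rw [div_mul_eq_mul_div, ← mul_pow]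
        ring_nf
    _ ≤ Real.exp E ^ p * (1 / 2) ^ i := by gcongr

theorem mul_add_one_rpow_mul_le {α : ℝ} (hα₀ : 0 ≤ α) (hα₁ : α ≤ 1) (i : ℕ) :
    (α * i + 1) ^ (α * i) ≤ Real.exp (i + 1) * (i ! : ℝ) ^ α := by
  have hbase : ((i : ℝ) + 1) ^ i ≤ Real.exp (i + 1) * i ! :=
    (div_le_iff₀ (by positivity)).1 (Real.pow_div_factorial_le_exp _ (by positivity) i)
  calc (α * i + 1) ^ (α * i) ≤ ((i : ℝ) + 1) ^ (α * i) := by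
        gcongr
        exact mul_le_of_le_one_left i.cast_nonneg hα₁
    _ = (((i : ℝ) + 1) ^ i) ^ α := by
        rw [mul_comm, Real.rpow_mul (by positivity), Real.rpow_natCast]
    _ ≤ (Real.exp (i + 1) * i !) ^ α := by gcongr
    _ = Real.exp (i + 1) ^ α * (i ! : ℝ) ^ α := Real.mul_rpow (by positivity) (by positivity)
    _ ≤ Real.exp (i + 1) * (i ! : ℝ) ^ α := by
        gcongr
        exact Real.rpow_le_self_of_one_le (Real.one_le_exp (by positivity)) hα₁

theorem abs_inv_GammaSeq_sub_mul_le {α β : ℝ} (hα₀ : 0 ≤ α) (hα₁ : α ≤ 1) (hβ : 0 ≤ β) (i : ℕ)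
    {m : ℕ} (hm : 1 ≤ m) :
    |(Real.GammaSeq (β - α * i) m)⁻¹| ≤
      Real.exp (2 * β + 1) * (Real.exp 3 ^ i * (i ! : ℝ) ^ α) := by
  have hαi : α * i ≤ i := mul_le_of_le_one_left i.cast_nonneg hα₁
  have hs : |β - α * i| ≤ β + i := by
    have : 0 ≤ α * i := by positivity
    exact abs_le.2 ⟨by linarith, by linarith⟩
  calc |(Real.GammaSeq (β - α * i) m)⁻¹|
      ≤ |β - α * i| * Real.exp |β - α * i| * (α * i + 1) ^ (α * i) :=
        abs_inv_GammaSeq_le (by positivity) (by linarith) hm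
    _ ≤ Real.exp (β + i) * Real.exp (β + i) * (Real.exp (i + 1) * (i ! : ℝ) ^ α) := by
        gcongr
        · exact hs.trans ((lt_add_one _).le.trans (Real.add_one_le_exp _))
        · exact mul_add_one_rpow_mul_le hα₀ hα₁ i
    _ = Real.exp (2 * β + 1) * (Real.exp 3 ^ i * (i ! : ℝ) ^ α) := by
        simp only [← mul_assoc, ← Real.exp_add, ← Real.exp_nat_mul]
        ring_nf

theorem tendsto_choose_div_pow {ι : Type*} {l : Filter ι} {N : ι → ℕ} {v : ι → ℝ} {x : ℝ}
    (hv : Tendsto v l atTop) (hN : Tendsto (fun m => N m / v m) l (𝓝 x)) (i : ℕ) :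
    Tendsto (fun m => ((N m).choose i : ℝ) / v m ^ i) l (𝓝 (x ^ i / i !)) := by
  have hdesc : Tendsto (fun m => (descPochhammer ℝ i).eval (N m : ℝ) / v m ^ i) l (𝓝 (x ^ i)) := by
    induction i with
    | zero => simpa using tendsto_const_nhds
    | succ i ih =>
      have hlast : Tendsto (fun m => N m / v m - i / v m) l (𝓝 (x - 0)) :=
        hN.sub (hv.const_div_atTop _)
      rw [sub_zero] at hlast
      simp only [descPochhammer_succ_eval, pow_succ, mul_div_mul_comm, sub_div]
      exact ih.mul hlast
  refine (hdesc.div_const (i ! : ℝ)).congr fun m => ?_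
  rw [Nat.cast_choose_eq_descPochhammer_div, div_right_comm]

theorem ascPochhammerDiff_div_eq_tsum (α β : ℝ) {m : ℕ} (hm : 1 ≤ m) (n : ℕ) :
    ascPochhammerDiff α β (m + 1) n / ((m : ℝ) ^ β * m !) =
      ∑' i : ℕ, (-1) ^ i * (n.choose i / ((m : ℝ) ^ α) ^ i) *
        (Real.GammaSeq (β - α * i) m)⁻¹ := by
  have hm₀ : (0 : ℝ) < m := Nat.cast_pos.2 hm
  rw [ascPochhammerDiff_eq_sum, tsum_eq_sum (s := range (n + 1)), sum_div]
  · refine sum_congr rfl fun i _ => ?_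
    rw [inv_GammaSeq_eq, Real.rpow_sub hm₀, Real.rpow_mul hm₀.le, Real.rpow_natCast]
    field_simp
  · intro i hi
    rw [Nat.choose_eq_zero_of_lt (by simpa using hi)]
    simp

theorem abs_choose_div_pow_mul_inv_GammaSeq_le {α β X : ℝ} (hα₀ : 0 ≤ α) (hα₁ : α ≤ 1)
    (hβ : 0 ≤ β) (i : ℕ) {m n : ℕ} (hm : 1 ≤ m) (hn : n / (m : ℝ) ^ α ≤ X) :
    |(-1) ^ i * (n.choose i / ((m : ℝ) ^ α) ^ i) * (Real.GammaSeq (β - α * i) m)⁻¹| ≤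
      Real.exp (2 * β + 1) * ((X * Real.exp 3) ^ i / (i ! : ℝ) ^ (1 - α)) := by
  have hchoose : (n.choose i : ℝ) / ((m : ℝ) ^ α) ^ i ≤ X ^ i / i ! := by
    calc (n.choose i : ℝ) / ((m : ℝ) ^ α) ^ i ≤ n ^ i / i ! / ((m : ℝ) ^ α) ^ i := by
          gcongr
          exact Nat.choose_le_pow_div i n
      _ = (n / (m : ℝ) ^ α) ^ i / i ! := by rw [div_pow, div_right_comm]
      _ ≤ X ^ i / i ! := by gcongr
  have hX : 0 ≤ X := hn.trans' (by positivity)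
  calc |(-1) ^ i * (n.choose i / ((m : ℝ) ^ α) ^ i) * (Real.GammaSeq (β - α * i) m)⁻¹|
      = n.choose i / ((m : ℝ) ^ α) ^ i * |(Real.GammaSeq (β - α * i) m)⁻¹| := by
        rw [abs_mul, abs_mul, abs_pow, abs_neg, abs_one, one_pow, one_mul,
          abs_of_nonneg (by positivity)]
    _ ≤ X ^ i / i ! * (Real.exp (2 * β + 1) * (Real.exp 3 ^ i * (i ! : ℝ) ^ α)) := by
        gcongr
        exact abs_inv_GammaSeq_sub_mul_le hα₀ hα₁ hβ i hm
    _ = Real.exp (2 * β + 1) * ((X * Real.exp 3) ^ i / (i ! : ℝ) ^ (1 - α)) := by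
        rw [Real.rpow_sub (by positivity), Real.rpow_one, mul_pow]
        field_simp

theorem tendsto_ascPochhammerDiff_div {α β x : ℝ} (hα : α ∈ Set.Ioo (0 : ℝ) 1) (hβ : 0 ≤ β)
    {N : ℕ → ℕ} (hN : Tendsto (fun m : ℕ => N m / (m : ℝ) ^ α) atTop (𝓝 x)) :
    Tendsto (fun m : ℕ => ascPochhammerDiff α β (m + 1) (N m) / ((m : ℝ) ^ β * m !)) atTop
      (𝓝 (wright (-α) β (-x))) := by
  obtain ⟨hα₀, hα₁⟩ := hα
  have hv : Tendsto (fun m : ℕ => (m : ℝ) ^ α) atTop atTop :=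
    (tendsto_rpow_atTop hα₀).comp tendsto_natCast_atTop_atTop
  have hx : 0 ≤ x := ge_of_tendsto' hN fun m => by positivity
  refine Tendsto.congr' ?_ (tendsto_tsum_of_dominated_convergence
    (f := fun m i => (-1) ^ i * ((N m).choose i / ((m : ℝ) ^ α) ^ i) *
      (Real.GammaSeq (β - α * i) m)⁻¹)
    (bound := fun i => Real.exp (2 * β + 1) * (((x + 1) * Real.exp 3) ^ i / (i ! : ℝ) ^ (1 - α)))
    ((summable_pow_div_factorial_rpow (by positivity) (sub_pos.2 hα₁)).mul_left _)
    (fun i => ?_) ?_)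
  · filter_upwards [eventually_ge_atTop 1] with m hm
    exact (ascPochhammerDiff_div_eq_tsum α β hm (N m)).symm
  · have hterm := ((tendsto_choose_div_pow hv hN i).const_mul ((-1 : ℝ) ^ i)).mul
      (tendsto_inv_GammaSeq (β - α * i))
    convert hterm using 2
    rw [neg_pow, neg_mul, ← sub_eq_add_neg]
    ring
  · filter_upwards [eventually_ge_atTop 1, hN.eventually_le_const (lt_add_one x)] with m hm hNm i
    exact abs_choose_div_pow_mul_inv_GammaSeq_le hα₀.le hα₁.le hβ i hm hNm

theorem tendsto_natFloor_mul_rpow_div {α x : ℝ} (hα : 0 < α) (hx : 0 ≤ x) :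
    Tendsto (fun m : ℕ => (⌊x * (m : ℝ) ^ α⌋₊ : ℝ) / (m : ℝ) ^ α) atTop (𝓝 x) :=
  (tendsto_nat_floor_mul_div_atTop hx).comp
    ((tendsto_rpow_atTop hα).comp tendsto_natCast_atTop_atTop)

theorem wright_neg_nonneg {α β x : ℝ} (hα : α ∈ Set.Ioo (0 : ℝ) 1) (hβ : 0 ≤ β) (hx : 0 ≤ x) :
    0 ≤ wright (-α) β (-x) :=
  ge_of_tendsto'
    (tendsto_ascPochhammerDiff_div hα hβ (tendsto_natFloor_mul_rpow_div hα.1 hx)) fun m =>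
    div_nonneg (ascPochhammerDiff_nonneg hα.1.le hα.2.le hβ _ _) (by positivity)

end WrightLimit

section LogConcavity

theorem eventually_natFloor_mul_rpow_le {α : ℝ} (hα : α < 1) (x : ℝ) :
    ∀ᶠ m : ℕ in atTop, ⌊x * (m : ℝ) ^ α⌋₊ ≤ m := by
  have hpow : Tendsto (fun m : ℕ => (m : ℝ) ^ (1 - α)) atTop atTop :=
    (tendsto_rpow_atTop (sub_pos.2 hα)).comp tendsto_natCast_atTop_atTop
  filter_upwards [hpow.eventually_ge_atTop x, eventually_ge_atTop 1] with m hxm hm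
  have hm₀ : (0 : ℝ) < m := Nat.cast_pos.2 hm
  refine Nat.floor_le_of_le ?_
  calc x * (m : ℝ) ^ α ≤ (m : ℝ) ^ (1 - α) * (m : ℝ) ^ α := by gcongr
    _ = m := by rw [← Real.rpow_add hm₀, sub_add_cancel, Real.rpow_one]

theorem tendsto_sub_div_sub_of_tendsto_div {ι : Type*} {l : Filter ι} {v A B C D : ι → ℝ}
    {a b c d : ℝ} (hv : ∀ᶠ m in l, v m ≠ 0) (hA : Tendsto (fun m => A m / v m) l (𝓝 a))
    (hB : Tendsto (fun m => B m / v m) l (𝓝 b)) (hC : Tendsto (fun m => C m / v m) l (𝓝 c))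
    (hD : Tendsto (fun m => D m / v m) l (𝓝 d)) (hcd : c - d ≠ 0) :
    Tendsto (fun m => (A m - B m) / (C m - D m)) l (𝓝 ((a - b) / (c - d))) := by
  refine ((hA.sub hB).div (hC.sub hD) hcd).congr' ?_
  filter_upwards [hv] with m hm
  simp only [Pi.div_apply, ← sub_div]
  rw [div_div_div_cancel_right₀ hm]

theorem ascPochhammerDiff_div_rpow_mul_rpow_le {α β Q : ℝ} (hα : α ∈ Set.Ioo (0 : ℝ) 1)
    (hβ₀ : 0 ≤ β) (hβ : 2 * α - 1 ≤ β) (hQ : 0 < Q) {m i k j : ℕ} (hik : i ≤ k) (hkj : k ≤ j)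
    (hij : i < j) (hjm : j ≤ m) :
    (ascPochhammerDiff α β m i / Q) ^ (((j : ℝ) - k) / (j - i)) *
        (ascPochhammerDiff α β m j / Q) ^ (((k : ℝ) - i) / (j - i)) ≤
      ascPochhammerDiff α β m k / Q := by
  refine rpow_mul_rpow_le_of_mul_le_sq (W := fun n => ascPochhammerDiff α β m n / Q) hik hkj hij
    (div_nonneg (ascPochhammerDiff_nonneg hα.1.le hα.2.le hβ₀ m i) hQ.le)
    (fun n hin hnj => div_pos ?_ hQ) fun n => ?_
  · obtain ⟨n, rfl⟩ := Nat.exists_eq_succ_of_ne_zero (Nat.ne_zero_of_lt hin)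
    exact ascPochhammerDiff_succ_pos hα hβ₀ (hnj.trans hjm)
  · rw [div_mul_div_comm, div_pow, ← sq]
    gcongr
    exact ascPochhammerDiff_mul_le_sq hα hβ₀ hβ m n

theorem wright_neg_rpow_mul_rpow_le {α β x y t : ℝ} (hα : α ∈ Set.Ioo (0 : ℝ) 1) (hβ₀ : 0 ≤ β)
    (hβ : 2 * α - 1 ≤ β) (hx : 0 ≤ x) (hxy : x < y) (ht : t ∈ Set.Ioo (0 : ℝ) 1) :
    wright (-α) β (-x) ^ (1 - t) * wright (-α) β (-y) ^ t ≤
      wright (-α) β (-((1 - t) * x + t * y)) := by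
  obtain ⟨ht₀, ht₁⟩ := ht
  set z := (1 - t) * x + t * y with hz
  have hxz : x ≤ z := by nlinarith
  have hzy : z ≤ y := by nlinarith
  have hyx : y - x ≠ 0 := sub_ne_zero.2 hxy.ne'
  have hpos : ∀ᶠ m : ℕ in atTop, 0 < (m : ℝ) ^ α := by
    filter_upwards [eventually_gt_atTop 0] with m hm
    positivity
  have hne := hpos.mono fun _ h => h.ne'
  have hNx := tendsto_natFloor_mul_rpow_div hα.1 hx
  have hNz := tendsto_natFloor_mul_rpow_div hα.1 (hx.trans hxz)
  have hNy := tendsto_natFloor_mul_rpow_div hα.1 (hx.trans hxy.le)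
  have hweightx := tendsto_sub_div_sub_of_tendsto_div hne hNy hNz hNy hNx hyx
  have hweighty := tendsto_sub_div_sub_of_tendsto_div hne hNz hNx hNy hNx hyx
  rw [show (y - z) / (y - x) = 1 - t by rw [div_eq_iff hyx, hz]; ring] at hweightx
  rw [show (z - x) / (y - x) = t by rw [div_eq_iff hyx, hz]; ring] at hweighty
  refine le_of_tendsto_of_tendsto
    (((tendsto_ascPochhammerDiff_div hα hβ₀ hNx).rpow hweightx (Or.inr (sub_pos.2 ht₁))).mul
      ((tendsto_ascPochhammerDiff_div hα hβ₀ hNy).rpow hweighty (Or.inr ht₀)))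
    (tendsto_ascPochhammerDiff_div hα hβ₀ hNz) ?_
  filter_upwards [hNx.eventually_lt hNy hxy, hpos, eventually_natFloor_mul_rpow_le hα.2 y,
    eventually_gt_atTop 0] with m hlt hv hle hm
  rw [div_lt_div_iff_of_pos_right hv, Nat.cast_lt] at hlt
  exact ascPochhammerDiff_div_rpow_mul_rpow_le hα hβ₀ hβ (by positivity)
    (Nat.floor_mono (by gcongr)) (Nat.floor_mono (by gcongr)) hlt (hle.trans m.le_succ)

theorem wright_logConcave_of_le_general (α β : ℝ) (hα : α ∈ Set.Ioo (0 : ℝ) 1) (hβ₀ : 0 ≤ β)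
    (hβ : 2 * α - 1 ≤ β) : LogConcaveOn' (fun x => wright (-α) β (-x)) (Set.Ici 0) :=
  logConcaveOn'_of_lt (fun _ hx => wright_neg_nonneg hα hβ₀ hx)
    fun _ hx _ _ hxy _ ht => wright_neg_rpow_mul_rpow_le hα hβ₀ hβ hx hxy ht

end LogConcavity

/-- Theorem D (b)(ii): for every `α ∈ (0,1)` and `β ≥ α`, the function
`x ↦ φ(-α, β, -x)` is log-concave on `[0,∞)`. -/
theorem wright_logConcave_of_le (α β : ℝ) (hα : α ∈ Set.Ioo (0 : ℝ) 1) (hβ : α ≤ β) :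
    LogConcaveOn' (fun x => wright (-α) β (-x)) (Set.Ici 0) :=
  wright_logConcave_of_le_general α β hα (hα.1.le.trans hβ) (by linarith [hα.2])
end

section
/- Let α ∈ [1/2, 1) and β ∈ [0, α], and let f(x) = φ(-α, β, -x). Then f has at most two inflection points in (0,∞): there do not exist three points 0 < x₁ < x₂ < x₃ each of which is an inflection point of f, where x₀ > 0 is called an inflection point of f if there exists ε > 0 such that f'' has one strict sign on (x₀ − ε, x₀) and the opposite strict sign on (x₀, x₀ + ε). -/
/-- `x₀` is an inflection point of `f`: on some punctured neighbourhood, `f''` has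
one strict sign on the left of `x₀` and the opposite strict sign on the right. -/
def IsInflectionPoint (f : ℝ → ℝ) (x₀ : ℝ) : Prop :=
  ∃ ε > 0,
    ((∀ x ∈ Set.Ioo (x₀ - ε) x₀, deriv (deriv f) x < 0) ∧
      (∀ x ∈ Set.Ioo x₀ (x₀ + ε), 0 < deriv (deriv f) x)) ∨
    ((∀ x ∈ Set.Ioo (x₀ - ε) x₀, 0 < deriv (deriv f) x) ∧
      (∀ x ∈ Set.Ioo x₀ (x₀ + ε), deriv (deriv f) x < 0))

/-!
Termwise differentiation shows that `f''` is again a Wright function `φ(-α, 1 - κ, -x)`, with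
`κ = 1 + 2α - β`. For `x = l ^ (1 - α)` the Hankel integral of this function has the phase
`l (z - z ^ α)`. Deforming it to the steepest descent curve `z = R e^{iψ}`, on which
`z - z ^ α = -K` is real, gives
`π φ(-α, 1 - κ, -x) = l ^ κ ∫₀^π e^{-l K(ψ)} R(ψ) ^ κ E(ψ) dψ`,
where `E = L sin (κψ) + cos (κψ)` and `L = R' / R`.

The sign of `E` is that of `cos (κψ - arctan L)`. Since the curve is convex, `κψ - arctan L` is
increasing in `ψ`, and it takes values in `[-π/2, 5π/2]` when `1 ≤ κ ≤ 3`; hence `{E < 0}` is an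
interval. As `K` is increasing too, for `l₁ < l₂ < l₃` there are `c₁ ≥ 0 ≥ c₂` for which
`c₁ e^{-l₁ K} + c₂ e^{-l₂ K} + e^{-l₃ K}` is nonpositive on `{E < 0}` and nonnegative elsewhere:
in the variable `v = e^{-(l₂ - l₁) K}` this compares a convex power of `v` with one of its secants.
The corresponding combination of the values of `f''` is nonnegative, so `f''` cannot take the
signs `-`, `+`, `-` at three successive points. But `f''` takes both signs near each inflection
point, so three of them would produce this pattern.
-/

namespace WrightInflection

open MeasureTheory Set Filter Topology
open scoped Real

/-! ### Trigonometric ratios -/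

section Trigonometry

variable {c t : ℝ}

lemma sin_mul_pos (hc : c ∈ Ioo (0 : ℝ) 1) (ht : t ∈ Ioo 0 π) : 0 < Real.sin (c * t) :=
  Real.sin_pos_of_pos_of_lt_pi (mul_pos hc.1 ht.1) (by nlinarith [hc.2, ht.1, ht.2])

lemma mul_sin_le_sin_mul (hc : c ∈ Icc (0 : ℝ) 1) (ht : t ∈ Icc 0 π) :
    c * Real.sin t ≤ Real.sin (c * t) := by
  simpa using strictConcaveOn_sin_Icc.concaveOn.2 ht (left_mem_Icc.2 Real.pi_pos.le) hc.1
    (sub_nonneg.2 hc.2) (add_sub_cancel c 1)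

lemma sin_mul_mul_cos_le (hc : c ∈ Ioo (0 : ℝ) 1) (ht : t ∈ Ioo 0 π) :
    Real.sin (c * t) * Real.cos t ≤ c * Real.cos (c * t) * Real.sin t := by
  let d : ℝ → ℝ := fun s ↦ c * Real.cos (c * s) * Real.sin s - Real.sin (c * s) * Real.cos s
  have hd (s : ℝ) : HasDerivAt d ((1 - c ^ 2) * (Real.sin (c * s) * Real.sin s)) s := by
    have hlin := hasDerivAt_const_mul (x := s) c
    refine (((hlin.cos.const_mul c).mul (Real.hasDerivAt_sin s)).sub
      (hlin.sin.mul (Real.hasDerivAt_cos s))).congr_deriv ?_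
    ring
  have hmono : MonotoneOn d (Icc 0 π) := by
    refine monotoneOn_of_hasDerivWithinAt_nonneg (convex_Icc _ _)
      (fun s _ ↦ (hd s).continuousAt.continuousWithinAt) (fun s _ ↦ (hd s).hasDerivWithinAt) ?_
    intro s hs
    rw [interior_Icc] at hs
    have hc2 : 0 ≤ 1 - c ^ 2 := by nlinarith [hc.1, hc.2]
    exact mul_nonneg hc2 (mul_pos (sin_mul_pos hc hs)
      (Real.sin_pos_of_mem_Ioo hs)).le
  have h := hmono (left_mem_Icc.2 Real.pi_pos.le) (Ioo_subset_Icc_self ht) ht.1.le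
  simp only [d, mul_zero, Real.sin_zero, zero_mul, sub_zero] at h
  linarith

lemma hasDerivAt_cot (ht : Real.sin t ≠ 0) : HasDerivAt Real.cot (-(1 + Real.cot t ^ 2)) t := by
  have hcot : Real.cot = fun s ↦ Real.cos s / Real.sin s := funext Real.cot_eq_cos_div_sin
  rw [hcot]
  refine ((Real.hasDerivAt_cos t).div (Real.hasDerivAt_sin t) ht).congr_deriv ?_
  field_simp
  ring

lemma one_add_cot_sq (ht : Real.sin t ≠ 0) : 1 + Real.cot t ^ 2 = (Real.sin t ^ 2)⁻¹ := by
  rw [Real.cot_eq_cos_div_sin]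
  field_simp
  exact Real.sin_sq_add_cos_sq t

lemma cot_mul_sub_cot (hc : c ∈ Ioo (0 : ℝ) 1) (ht : t ∈ Ioo 0 π) :
    Real.cot (c * t) - Real.cot t
      = Real.sin ((1 - c) * t) / (Real.sin (c * t) * Real.sin t) := by
  have hs := (sin_mul_pos hc ht).ne'
  have hs' := (Real.sin_pos_of_mem_Ioo ht).ne'
  rw [Real.cot_eq_cos_div_sin, Real.cot_eq_cos_div_sin, show (1 - c) * t = t - c * t by ring,
    Real.sin_sub]
  field_simp

lemma cot_le_cot_mul (hc : c ∈ Ioo (0 : ℝ) 1) (ht : t ∈ Ioo 0 π) :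
    Real.cot t ≤ Real.cot (c * t) := by
  have h := sin_mul_pos ⟨sub_pos.2 hc.2, sub_lt_self 1 hc.1⟩ ht
  rw [← sub_nonneg, cot_mul_sub_cot hc ht]
  exact (div_pos h (mul_pos (sin_mul_pos hc ht) (Real.sin_pos_of_mem_Ioo ht))).le

lemma cot_le_mul_cot_mul (hc : c ∈ Ioo (0 : ℝ) 1) (ht : t ∈ Ioo 0 π) :
    Real.cot t ≤ c * Real.cot (c * t) := by
  rw [Real.cot_eq_cos_div_sin, Real.cot_eq_cos_div_sin, ← mul_div_assoc,
    div_le_div_iff₀ (Real.sin_pos_of_mem_Ioo ht) (sin_mul_pos hc ht), mul_comm]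
  exact sin_mul_mul_cos_le hc ht

/-- The ratio `sin (c t) / sin t`, in terms of which the steepest descent contour is written. -/
noncomputable def sinRatio (c t : ℝ) : ℝ := Real.sin (c * t) / Real.sin t

lemma sinRatio_pos (hc : c ∈ Ioo (0 : ℝ) 1) (ht : t ∈ Ioo 0 π) : 0 < sinRatio c t :=
  div_pos (sin_mul_pos hc ht) (Real.sin_pos_of_mem_Ioo ht)

lemma hasDerivAt_sinRatio (hc : c ∈ Ioo (0 : ℝ) 1) (ht : t ∈ Ioo 0 π) :
    HasDerivAt (sinRatio c) (sinRatio c t * (c * Real.cot (c * t) - Real.cot t)) t := by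
  have hs := (sin_mul_pos hc ht).ne'
  have hs' := (Real.sin_pos_of_mem_Ioo ht).ne'
  refine ((hasDerivAt_const_mul (x := t) c).sin.div (Real.hasDerivAt_sin t) hs').congr_deriv ?_
  rw [sinRatio, Real.cot_eq_cos_div_sin, Real.cot_eq_cos_div_sin]
  field_simp

lemma monotoneOn_sinRatio (hc : c ∈ Ioo (0 : ℝ) 1) : MonotoneOn (sinRatio c) (Ioo 0 π) := by
  refine monotoneOn_of_hasDerivWithinAt_nonneg (convex_Ioo _ _)
    (fun s hs ↦ (hasDerivAt_sinRatio hc hs).continuousAt.continuousWithinAt)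
    (fun s hs ↦ (hasDerivAt_sinRatio hc (interior_subset hs)).hasDerivWithinAt) ?_
  intro s hs
  have hs := interior_subset hs
  exact mul_nonneg (sinRatio_pos hc hs).le (sub_nonneg.2 (cot_le_mul_cot_mul hc hs))

lemma tendsto_sinRatio_zero (c : ℝ) : Tendsto (sinRatio c) (𝓝[>] 0) (𝓝 c) := by
  have hcont : ContinuousAt (fun s ↦ c * Real.sinc (c * s) / Real.sinc s) 0 :=
    ContinuousAt.div (by have := Real.continuous_sinc; fun_prop)
      Real.continuous_sinc.continuousAt (by simp)
  have hlim : Tendsto (fun s ↦ c * Real.sinc (c * s) / Real.sinc s) (𝓝[>] 0) (𝓝 c) := by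
    simpa using hcont.tendsto.mono_left nhdsWithin_le_nhds
  refine hlim.congr' ?_
  filter_upwards [self_mem_nhdsWithin] with s (hs : 0 < s)
  rcases eq_or_ne c 0 with rfl | hc
  · simp [sinRatio]
  · rw [sinRatio, Real.sinc_of_ne_zero hs.ne', Real.sinc_of_ne_zero (mul_ne_zero hc hs.ne')]
    field_simp

lemma tendsto_sin_pi_left : Tendsto Real.sin (𝓝[<] π) (𝓝[>] 0) := by
  refine tendsto_nhdsWithin_of_tendsto_nhds_of_eventually_within _ ?_ ?_
  · simpa using (Real.continuous_sin.tendsto π).mono_left nhdsWithin_le_nhds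
  · filter_upwards [Ioo_mem_nhdsLT Real.pi_pos] with s hs using Real.sin_pos_of_mem_Ioo hs

lemma tendsto_sinRatio_pi (hc : c ∈ Ioo (0 : ℝ) 1) :
    Tendsto (sinRatio c) (𝓝[<] π) atTop := by
  have hpos : 0 < Real.sin (c * π) :=
    Real.sin_pos_of_pos_of_lt_pi (mul_pos hc.1 Real.pi_pos) (by nlinarith [hc.2, Real.pi_pos])
  have hcont : Continuous fun s ↦ Real.sin (c * s) := by fun_prop
  exact ((hcont.tendsto π).mono_left nhdsWithin_le_nhds).pos_mul_atTop hpos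
    (tendsto_inv_nhdsGT_zero.comp tendsto_sin_pi_left)

end Trigonometry

/-! ### The steepest descent contour -/

section Contour

variable {α ψ κ : ℝ}

/-- Polar radius of the curve `z = R e^{iψ}` on which `z - z ^ α` is real. -/
noncomputable def contourRadius (α ψ : ℝ) : ℝ := sinRatio α ψ ^ (1 - α)⁻¹

/-- Logarithmic derivative of the contour radius with respect to the angle. -/
noncomputable def contourSlope (α ψ : ℝ) : ℝ :=
  (α * Real.cot (α * ψ) - Real.cot ψ) / (1 - α)

/-- The value of `z ^ α - z` at the contour point `z` of argument `ψ`. -/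
noncomputable def contourDecay (α ψ : ℝ) : ℝ := contourRadius α ψ ^ α * sinRatio (1 - α) ψ

/-- The imaginary part of `dζ/dψ * e^{iκψ}` along the contour, where `ζ = log R + iψ`. -/
noncomputable def contourWeight (α κ ψ : ℝ) : ℝ :=
  contourSlope α ψ * Real.sin (κ * ψ) + Real.cos (κ * ψ)

lemma one_sub_mem_Ioo (hα : α ∈ Ioo (0 : ℝ) 1) : 1 - α ∈ Ioo (0 : ℝ) 1 :=
  ⟨sub_pos.2 hα.2, sub_lt_self 1 hα.1⟩

lemma contourRadius_pos (hα : α ∈ Ioo (0 : ℝ) 1) (hψ : ψ ∈ Ioo 0 π) : 0 < contourRadius α ψ :=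
  Real.rpow_pos_of_pos (sinRatio_pos hα hψ) _

lemma contourRadius_eq_sinRatio_mul (hα : α ∈ Ioo (0 : ℝ) 1) (hψ : ψ ∈ Ioo 0 π) :
    contourRadius α ψ = sinRatio α ψ * contourRadius α ψ ^ α := by
  have h1 := sinRatio_pos hα hψ
  have hne : 1 - α ≠ 0 := (sub_pos.2 hα.2).ne'
  rw [contourRadius, ← Real.rpow_mul h1.le,
    ← Real.rpow_one_add' h1.le (by field_simp; simpa using hne)]
  congr 1
  field_simp
  ring

lemma hasDerivAt_contourRadius (hα : α ∈ Ioo (0 : ℝ) 1) (hψ : ψ ∈ Ioo 0 π) :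
    HasDerivAt (contourRadius α) (contourRadius α ψ * contourSlope α ψ) ψ := by
  have h := sinRatio_pos hα hψ
  refine ((hasDerivAt_sinRatio hα hψ).rpow_const (p := (1 - α)⁻¹) (Or.inl h.ne')).congr_deriv ?_
  rw [contourRadius, contourSlope, Real.rpow_sub_one h.ne']
  field_simp

lemma monotoneOn_contourRadius (hα : α ∈ Ioo (0 : ℝ) 1) :
    MonotoneOn (contourRadius α) (Ioo 0 π) := fun _ hs _ ht hst ↦
  Real.rpow_le_rpow (sinRatio_pos hα hs).le (monotoneOn_sinRatio hα hs ht hst)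
    (inv_nonneg.2 (sub_nonneg.2 hα.2.le))

lemma tendsto_contourRadius_zero (hα : 0 < α) :
    Tendsto (contourRadius α) (𝓝[>] 0) (𝓝 (α ^ (1 - α)⁻¹)) :=
  (tendsto_sinRatio_zero α).rpow_const (Or.inl hα.ne')

lemma tendsto_contourRadius_pi (hα : α ∈ Ioo (0 : ℝ) 1) :
    Tendsto (contourRadius α) (𝓝[<] π) atTop :=
  (tendsto_rpow_atTop (inv_pos.2 (sub_pos.2 hα.2))).comp (tendsto_sinRatio_pi hα)

lemma contourDecay_pos (hα : α ∈ Ioo (0 : ℝ) 1) (hψ : ψ ∈ Ioo 0 π) : 0 < contourDecay α ψ :=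
  mul_pos (Real.rpow_pos_of_pos (contourRadius_pos hα hψ) _)
    (sinRatio_pos (one_sub_mem_Ioo hα) hψ)

lemma monotoneOn_contourDecay (hα : α ∈ Ioo (0 : ℝ) 1) :
    MonotoneOn (contourDecay α) (Ioo 0 π) := fun _ hs _ ht hst ↦
  mul_le_mul
    (Real.rpow_le_rpow (contourRadius_pos hα hs).le (monotoneOn_contourRadius hα hs ht hst) hα.1.le)
    (monotoneOn_sinRatio (one_sub_mem_Ioo hα) hs ht hst)
    (sinRatio_pos (one_sub_mem_Ioo hα) hs).le
    (Real.rpow_pos_of_pos (contourRadius_pos hα ht) _).le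

lemma sinRatio_mul_exp_sub_exp (hψ : Real.sin ψ ≠ 0) :
    sinRatio α ψ * Complex.exp (ψ * Complex.I) - Complex.exp ((α * ψ : ℝ) * Complex.I)
      = -sinRatio (1 - α) ψ := by
  rw [Complex.exp_mul_I, Complex.exp_mul_I, ← Complex.ofReal_cos, ← Complex.ofReal_sin,
    ← Complex.ofReal_cos, ← Complex.ofReal_sin, sinRatio, sinRatio,
    show (1 - α) * ψ = ψ - α * ψ by ring, Real.sin_sub]
  have : (Real.sin ψ : ℂ) ≠ 0 := Complex.ofReal_ne_zero.2 hψ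
  push_cast
  push_cast at this
  field_simp
  ring

lemma contourRadius_mul_exp_sub (hα : α ∈ Ioo (0 : ℝ) 1) (hψ : ψ ∈ Ioo 0 π) :
    contourRadius α ψ * Complex.exp (ψ * Complex.I)
        - (contourRadius α ψ ^ α : ℝ) * Complex.exp ((α * ψ : ℝ) * Complex.I)
      = -contourDecay α ψ := by
  have hR : (contourRadius α ψ : ℂ) = sinRatio α ψ * (contourRadius α ψ ^ α : ℝ) :=
    mod_cast contourRadius_eq_sinRatio_mul hα hψ
  have h := sinRatio_mul_exp_sub_exp (α := α) (Real.sin_pos_of_mem_Ioo hψ).ne'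
  rw [contourDecay, hR, Complex.ofReal_mul (_ ^ _)]
  linear_combination (contourRadius α ψ ^ α : ℝ) * h

lemma hasDerivAt_contourSlope (hα : α ∈ Ioo (0 : ℝ) 1) (hψ : ψ ∈ Ioo 0 π) :
    HasDerivAt (contourSlope α)
      ((1 + Real.cot ψ ^ 2 - α ^ 2 * (1 + Real.cot (α * ψ) ^ 2)) / (1 - α)) ψ := by
  have h1 := (hasDerivAt_cot (sin_mul_pos hα hψ).ne').comp ψ (hasDerivAt_const_mul (x := ψ) α)
  have h2 := hasDerivAt_cot (Real.sin_pos_of_mem_Ioo hψ).ne'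
  exact (((h1.const_mul α).sub h2).div_const (1 - α)).congr_deriv (by ring)

lemma sq_one_sub_mul_one_add_cot_sq_le (hα : α ∈ Ioo (0 : ℝ) 1) (hψ : ψ ∈ Ioo 0 π) :
    (1 - α) ^ 2 * (1 + Real.cot (α * ψ) ^ 2) ≤ (Real.cot (α * ψ) - Real.cot ψ) ^ 2 := by
  have hs := sin_mul_pos hα hψ
  have hs' := Real.sin_pos_of_mem_Ioo hψ
  have h : (1 - α) * Real.sin ψ ≤ Real.sin ((1 - α) * ψ) :=
    mul_sin_le_sin_mul (Ioo_subset_Icc_self (one_sub_mem_Ioo hα)) (Ioo_subset_Icc_self hψ)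
  have h0 : 0 ≤ (1 - α) * Real.sin ψ := mul_nonneg (sub_nonneg.2 hα.2.le) hs'.le
  rw [cot_mul_sub_cot hα hψ, one_add_cot_sq hs.ne', div_pow, mul_pow, ← div_eq_mul_inv,
    div_le_div_iff₀ (by positivity) (by positivity)]
  calc (1 - α) ^ 2 * (Real.sin (α * ψ) ^ 2 * Real.sin ψ ^ 2)
      = ((1 - α) * Real.sin ψ) ^ 2 * Real.sin (α * ψ) ^ 2 := by ring
    _ ≤ Real.sin ((1 - α) * ψ) ^ 2 * Real.sin (α * ψ) ^ 2 := by gcongr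

lemma deriv_contourSlope_le (hα : α ∈ Ioo (0 : ℝ) 1) (hψ : ψ ∈ Ioo 0 π) :
    deriv (contourSlope α) ψ ≤ 1 + contourSlope α ψ ^ 2 := by
  have h1 : 0 < 1 - α := sub_pos.2 hα.2
  have h := mul_le_mul_of_nonneg_left (sq_one_sub_mul_one_add_cot_sq_le hα hψ) hα.1.le
  rw [(hasDerivAt_contourSlope hα hψ).deriv, contourSlope, div_pow, ← sub_nonneg]
  have key : 1 + (α * Real.cot (α * ψ) - Real.cot ψ) ^ 2 / (1 - α) ^ 2
        - (1 + Real.cot ψ ^ 2 - α ^ 2 * (1 + Real.cot (α * ψ) ^ 2)) / (1 - α)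
      = (α * (Real.cot (α * ψ) - Real.cot ψ) ^ 2
          - α * ((1 - α) ^ 2 * (1 + Real.cot (α * ψ) ^ 2))) / (1 - α) ^ 2 := by
    field_simp
    ring
  rw [key]
  exact div_nonneg (sub_nonneg.2 h) (by positivity)

-- The tangent of the contour has direction `ψ - arctan L + π / 2`: the contour is convex.
lemma monotoneOn_sub_arctan_contourSlope (hα : α ∈ Ioo (0 : ℝ) 1) :
    MonotoneOn (fun ψ ↦ ψ - Real.arctan (contourSlope α ψ)) (Ioo 0 π) := by
  have hd (ψ : ℝ) (hψ : ψ ∈ Ioo 0 π) :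
      HasDerivAt (fun ψ ↦ ψ - Real.arctan (contourSlope α ψ))
        (1 - 1 / (1 + contourSlope α ψ ^ 2) * deriv (contourSlope α) ψ) ψ :=
    (hasDerivAt_id ψ).sub (hasDerivAt_contourSlope hα hψ).differentiableAt.hasDerivAt.arctan
  refine monotoneOn_of_hasDerivWithinAt_nonneg (convex_Ioo _ _)
    (fun ψ hψ ↦ (hd ψ hψ).continuousAt.continuousWithinAt)
    (fun ψ hψ ↦ (hd ψ (interior_subset hψ)).hasDerivWithinAt) fun ψ hψ ↦ ?_
  rw [sub_nonneg, one_div_mul_eq_div, div_le_one (by positivity)]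
  exact deriv_contourSlope_le hα (interior_subset hψ)

lemma neg_cot_le_contourSlope (hα : α ∈ Ioo (0 : ℝ) 1) (hψ : ψ ∈ Ioo 0 π) :
    -Real.cot ψ ≤ contourSlope α ψ := by
  have h := mul_nonneg hα.1.le (sub_nonneg.2 (cot_le_cot_mul hα hψ))
  rw [contourSlope, le_div_iff₀ (sub_pos.2 hα.2)]
  linarith

lemma sub_arctan_contourSlope_mem_Icc (hα : α ∈ Ioo (0 : ℝ) 1) (hψ : ψ ∈ Ioo 0 π) :
    ψ - Real.arctan (contourSlope α ψ) ∈ Icc (-(π / 2)) (π / 2) := by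
  have htan : Real.tan (ψ - π / 2) = -Real.cot ψ := by
    rw [← neg_sub, Real.tan_neg, Real.tan_pi_div_two_sub, Real.tan_inv_eq_cot]
  have harctan : ψ - π / 2 ≤ Real.arctan (contourSlope α ψ) := by
    rw [← Real.arctan_tan (x := ψ - π / 2) (by linarith [hψ.1]) (by linarith [hψ.2]), htan]
    exact Real.arctan_mono (neg_cot_le_contourSlope hα hψ)
  constructor <;> linarith [hψ.1, Real.arctan_lt_pi_div_two (contourSlope α ψ)]

lemma contourWeight_eq_sqrt_mul_cos :
    contourWeight α κ ψ
      = √(1 + contourSlope α ψ ^ 2) * Real.cos (κ * ψ - Real.arctan (contourSlope α ψ)) := by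
  have h : √(1 + contourSlope α ψ ^ 2) ≠ 0 := by positivity
  rw [contourWeight, Real.cos_sub, Real.cos_arctan, Real.sin_arctan]
  field_simp
  ring

lemma contourWeight_neg_iff (hα : α ∈ Ioo (0 : ℝ) 1) (hκ : κ ∈ Icc (1 : ℝ) 3)
    (hψ : ψ ∈ Ioo 0 π) :
    contourWeight α κ ψ < 0 ↔
      κ * ψ - Real.arctan (contourSlope α ψ) ∈ Ioo (π / 2) (3 * π / 2) := by
  rw [contourWeight_eq_sqrt_mul_cos, ← neg_pos, ← mul_neg,
    mul_pos_iff_of_pos_left (by positivity), neg_pos]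
  set T := κ * ψ - Real.arctan (contourSlope α ψ)
  obtain ⟨hlow, hupp⟩ := sub_arctan_contourSlope_mem_Icc hα hψ
  have hT : T ∈ Icc (-(π / 2)) (5 * π / 2) := by
    constructor <;> simp only [T] <;> nlinarith [hψ.1, hψ.2, hκ.1, hκ.2]
  refine ⟨fun h ↦ ⟨?_, ?_⟩, fun h ↦
    Real.cos_neg_of_pi_div_two_lt_of_lt h.1 (by linarith [h.2])⟩
  · by_contra! hle
    exact h.not_ge (Real.cos_nonneg_of_neg_pi_div_two_le_of_le hT.1 hle)
  · by_contra! hle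
    rw [← Real.cos_sub_two_pi] at h
    exact h.not_ge (Real.cos_nonneg_of_neg_pi_div_two_le_of_le (by linarith) (by linarith [hT.2]))

lemma ordConnected_contourWeight_neg (hα : α ∈ Ioo (0 : ℝ) 1) (hκ : κ ∈ Icc (1 : ℝ) 3) :
    {ψ ∈ Ioo 0 π | contourWeight α κ ψ < 0}.OrdConnected := by
  have hmono : MonotoneOn (fun ψ ↦ κ * ψ - Real.arctan (contourSlope α ψ)) (Ioo 0 π) := by
    intro s hs t ht hst
    have h := monotoneOn_sub_arctan_contourSlope hα hs ht hst
    have h' := mul_le_mul_of_nonneg_left hst (sub_nonneg.2 hκ.1)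
    simp only at h ⊢
    linarith
  rw [ordConnected_iff]
  intro s hs t ht _ ψ hψ
  have hψ' : ψ ∈ Ioo 0 π := ⟨hs.1.1.trans_le hψ.1, hψ.2.trans_lt ht.1.2⟩
  refine ⟨hψ', (contourWeight_neg_iff hα hκ hψ').2 ⟨?_, ?_⟩⟩
  · exact ((contourWeight_neg_iff hα hκ hs.1).1 hs.2).1.trans_le (hmono hs.1 hψ' hψ.1)
  · exact (hmono hψ' ht.1 hψ.2).trans_lt ((contourWeight_neg_iff hα hκ ht.1).1 ht.2).2

end Contour

/-! ### Exponential sums with three terms -/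

section ExponentialSum

variable {f : ℝ → ℝ} {s : Set ℝ} {m u w : ℝ}

lemma convexOn_le_secant_and_secant_le (hf : ConvexOn ℝ s f) (hu : u ∈ s) (hw : w ∈ s)
    (huw : u < w) :
    (∀ x ∈ Icc u w, f x ≤ f u + (f w - f u) / (w - u) * (x - u)) ∧
      ∀ x ∈ s, x ∉ Ioo u w → f u + (f w - f u) / (w - u) * (x - u) ≤ f x := by
  refine ⟨fun x hx ↦ ?_, fun x hx hxuw ↦ ?_⟩
  · rcases hx.1.eq_or_lt with rfl | hux
    · simp
    have h := hf.secant_mono hu (hf.1.ordConnected.out hu hw hx) hw hux.ne' huw.ne' hx.2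
    rwa [div_le_iff₀ (sub_pos.2 hux), sub_le_iff_le_add'] at h
  · rcases lt_trichotomy x u with hxu | rfl | hux
    · have h := hf.secant_mono hu hx hw hxu.ne huw.ne' (hxu.trans huw).le
      rwa [div_le_iff_of_neg (sub_neg.2 hxu), le_sub_iff_add_le'] at h
    · simp
    · have hwx : w ≤ x := le_of_not_gt fun h ↦ hxuw ⟨hux, h⟩
      have h := hf.secant_mono hu hw hx huw.ne' hux.ne' hwx
      rwa [le_div_iff₀ (sub_pos.2 hux), le_sub_iff_add_le'] at h

lemma convexOn_tangent_le (hf : ConvexOn ℝ s f) {f' : ℝ} (hu : u ∈ s) (hd : HasDerivAt f f' u)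
    {x : ℝ} (hx : x ∈ s) : f u + f' * (x - u) ≤ f x := by
  rcases lt_trichotomy x u with hxu | rfl | hux
  · have h := hf.slope_le_of_hasDerivAt hx hu hxu hd
    rw [slope_def_field, div_le_iff₀ (sub_pos.2 hxu)] at h
    linarith
  · simp
  · have h := hf.le_slope_of_hasDerivAt hu hx hux hd
    rwa [slope_def_field, le_div_iff₀ (sub_pos.2 hux), le_sub_iff_add_le'] at h

lemma exists_add_mul_add_rpow_sign (hm : 1 < m) (hu : 0 ≤ u) (huw : u ≤ w) :
    ∃ c₁ c₂ : ℝ, 0 ≤ c₁ ∧ c₂ ≤ 0 ∧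
      (∀ x ∈ Icc u w, c₁ + c₂ * x + x ^ m ≤ 0) ∧
      ∀ x, 0 ≤ x → x ∉ Ioo u w → 0 ≤ c₁ + c₂ * x + x ^ m := by
  have hconv := convexOn_rpow hm.le
  obtain ⟨b, hb, hin, hout⟩ : ∃ b : ℝ, 0 ≤ b ∧
      (∀ x ∈ Icc u w, x ^ m ≤ u ^ m + b * (x - u)) ∧
      ∀ x, 0 ≤ x → x ∉ Ioo u w → u ^ m + b * (x - u) ≤ x ^ m := by
    rcases huw.eq_or_lt with rfl | huw
    · refine ⟨m * u ^ (m - 1), by positivity, by simp, fun x hx _ ↦ ?_⟩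
      exact convexOn_tangent_le hconv hu (Real.hasDerivAt_rpow_const (Or.inr hm.le)) hx
    · obtain ⟨hin, hout⟩ := convexOn_le_secant_and_secant_le hconv hu (hu.trans huw.le) huw
      refine ⟨_, div_nonneg (sub_nonneg.2 ?_) (sub_nonneg.2 huw.le), hin, hout⟩
      exact Real.rpow_le_rpow hu huw.le (by linarith)
  refine ⟨b * u - u ^ m, -b, ?_, neg_nonpos.2 hb, fun x hx ↦ ?_, fun x hx hxuw ↦ ?_⟩
  · have h := hout 0 le_rfl fun h ↦ hu.not_gt h.1
    rw [Real.zero_rpow (by linarith)] at h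
    linarith
  · linarith [hin x hx]
  · linarith [hout x hx hxuw]

lemma exists_add_mul_add_rpow_sign_of_antitoneOn {v : ℝ → ℝ} {N : Set ℝ} (hm : 1 < m)
    (hv : AntitoneOn v s) (hv0 : ∀ t ∈ s, 0 ≤ v t) (hbdd : BddAbove (v '' s)) (hNs : N ⊆ s)
    (hN : N.OrdConnected) :
    ∃ c₁ c₂ : ℝ, 0 ≤ c₁ ∧ c₂ ≤ 0 ∧
      (∀ t ∈ N, c₁ + c₂ * v t + v t ^ m ≤ 0) ∧
      ∀ t ∈ s, t ∉ N → 0 ≤ c₁ + c₂ * v t + v t ^ m := by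
  rcases N.eq_empty_or_nonempty with rfl | ⟨n₀, hn₀⟩
  · refine ⟨0, 0, le_rfl, le_rfl, by simp, fun t ht _ ↦ ?_⟩
    simpa using Real.rpow_nonneg (hv0 t ht) m
  have hne : (v '' N).Nonempty := ⟨_, mem_image_of_mem v hn₀⟩
  have hbelow : BddBelow (v '' N) := ⟨0, forall_mem_image.2 fun n hn ↦ hv0 n (hNs hn)⟩
  have habove : BddAbove (v '' N) := hbdd.mono (image_mono hNs)
  have hmem (n : ℝ) (hn : n ∈ N) : v n ∈ Icc (sInf (v '' N)) (sSup (v '' N)) :=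
    ⟨csInf_le hbelow (mem_image_of_mem v hn), le_csSup habove (mem_image_of_mem v hn)⟩
  obtain ⟨c₁, c₂, hc₁, hc₂, hin, hout⟩ := exists_add_mul_add_rpow_sign hm
    (Real.sInf_nonneg (forall_mem_image.2 fun n hn ↦ hv0 n (hNs hn)))
    ((hmem n₀ hn₀).1.trans (hmem n₀ hn₀).2)
  refine ⟨c₁, c₂, hc₁, hc₂, fun t ht ↦ hin _ (hmem t ht),
    fun t ht htN ↦ hout _ (hv0 t ht) fun hvt ↦ ?_⟩
  obtain ⟨_, ⟨n, hn, rfl⟩, hnt⟩ := exists_lt_of_csInf_lt hne hvt.1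
  obtain ⟨_, ⟨n', hn', rfl⟩, htn'⟩ := exists_lt_of_lt_csSup hne hvt.2
  exact htN (hN.out hn' hn ⟨(hv.reflect_lt ht (hNs hn') htn').le,
    (hv.reflect_lt (hNs hn) ht hnt).le⟩)

end ExponentialSum

/-! ### The Wright function and its integral representation -/

section Gamma

variable {α κ c : ℝ}

lemma integrable_exp_mul_comp_exp_iff {g : ℝ → ℝ} :
    Integrable (fun s ↦ Real.exp s * g (Real.exp s)) ↔ IntegrableOn g (Ioi 0) := by
  have h := integrableOn_image_iff_integrableOn_deriv_smul_of_monotoneOn MeasurableSet.univ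
    (fun s _ ↦ (Real.hasDerivAt_exp s).hasDerivWithinAt) (Real.exp_monotone.monotoneOn univ) g
  rw [image_univ, Real.range_exp, integrableOn_univ] at h
  exact h.symm

lemma integral_exp_mul_comp_exp (g : ℝ → ℝ) :
    ∫ s, Real.exp s * g (Real.exp s) = ∫ r in Ioi 0, g r := by
  have h := integral_image_eq_integral_deriv_smul_of_monotoneOn MeasurableSet.univ
    (fun s _ ↦ (Real.hasDerivAt_exp s).hasDerivWithinAt) (Real.exp_monotone.monotoneOn univ) g
  rw [image_univ, Real.range_exp, setIntegral_univ] at h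
  exact h.symm

lemma exp_neg_mul_exp_add (c κ s : ℝ) :
    Real.exp (-c * Real.exp s + κ * s)
      = Real.exp s * (Real.exp s ^ (κ - 1) * Real.exp (-c * Real.exp s)) := by
  rw [← Real.exp_mul, ← Real.exp_add, ← Real.exp_add]
  ring_nf

lemma integrable_exp_neg_mul_exp_add (hc : 0 < c) (hκ : 0 < κ) :
    Integrable fun s ↦ Real.exp (-c * Real.exp s + κ * s) := by
  simp_rw [exp_neg_mul_exp_add]
  refine (integrable_exp_mul_comp_exp_iff (g := fun r ↦ r ^ (κ - 1) * Real.exp (-c * r))).2 ?_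
  simpa using integrableOn_rpow_mul_exp_neg_mul_rpow (p := 1) (s := κ - 1) (by linarith)
    one_pos hc

lemma integral_exp_neg_exp_add (hκ : 0 < κ) :
    ∫ s, Real.exp (-Real.exp s + κ * s) = Real.Gamma κ := by
  have h (s : ℝ) := exp_neg_mul_exp_add 1 κ s
  simp only [neg_one_mul] at h
  simp_rw [h]
  rw [integral_exp_mul_comp_exp fun r ↦ r ^ (κ - 1) * Real.exp (-r), Real.Gamma_eq_integral hκ]
  simp_rw [mul_comm]

lemma exists_mul_exp_mul_le (hα : α ∈ Ioo (0 : ℝ) 1) (hc : 0 < c) (x : ℝ) :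
    ∃ C, ∀ s, x * Real.exp (α * s) ≤ c * Real.exp s + C := by
  have hlim : Tendsto (fun s ↦ |x| * Real.exp ((α - 1) * s)) atTop (𝓝 0) := by
    simpa using (Real.tendsto_exp_atBot.comp
      (tendsto_id.const_mul_atTop_of_neg (sub_neg.2 hα.2))).const_mul |x|
  obtain ⟨S, hS⟩ := eventually_atTop.1 (hlim.eventually_le_const hc)
  refine ⟨|x| * Real.exp (α * S), fun s ↦ ?_⟩
  have hx : x * Real.exp (α * s) ≤ |x| * Real.exp (α * s) := by
    gcongr
    exact le_abs_self x
  refine hx.trans ?_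
  rcases le_total s S with hs | hs
  · have : |x| * Real.exp (α * s) ≤ |x| * Real.exp (α * S) := by
      have := hα.1
      gcongr
    linarith [mul_pos hc (Real.exp_pos s)]
  · calc |x| * Real.exp (α * s) = |x| * Real.exp ((α - 1) * s) * Real.exp s := by
          rw [mul_assoc, ← Real.exp_add]
          ring_nf
      _ ≤ c * Real.exp s := by
          gcongr
          exact hS s hs
      _ ≤ c * Real.exp s + |x| * Real.exp (α * S) := le_add_of_nonneg_right (by positivity)

lemma integrable_exp_neg_mul_exp_add_mul_exp (hα : α ∈ Ioo (0 : ℝ) 1) (hc : 0 < c) (hκ : 0 < κ)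
    (x : ℝ) : Integrable fun s ↦ Real.exp (-c * Real.exp s + x * Real.exp (α * s) + κ * s) := by
  obtain ⟨C, hC⟩ := exists_mul_exp_mul_le hα (half_pos hc) x
  refine ((integrable_exp_neg_mul_exp_add (half_pos hc) hκ).const_mul (Real.exp C)).mono'
    (by fun_prop) (Eventually.of_forall fun s ↦ ?_)
  rw [Real.norm_of_nonneg (Real.exp_pos _).le, ← Real.exp_add, Real.exp_le_exp]
  linarith [hC s]

lemma hasSum_pow_div_factorial_mul_Gamma (hα : α ∈ Ioo (0 : ℝ) 1) (hκ : 0 < κ) (w : ℂ) :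
    HasSum (fun n : ℕ ↦ w ^ n / n.factorial * Real.Gamma (α * n + κ))
      (∫ s : ℝ, Complex.exp (-Real.exp s + w * Real.exp (α * s) + κ * s)) := by
  have hterm (n : ℕ) : w ^ n / n.factorial * Real.Gamma (α * n + κ)
      = ∫ s : ℝ, Real.exp (-Real.exp s + κ * s) * ((w * Real.exp (α * s)) ^ n / n.factorial) := by
    rw [← integral_exp_neg_exp_add (by have := hα.1; positivity), ← integral_complex_ofReal,
      ← integral_const_mul]
    congr with s
    rw [show -Real.exp s + (α * n + κ) * s = -Real.exp s + κ * s + n * (α * s) by ring,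
      Real.exp_add _ (n * (α * s)), Real.exp_nat_mul]
    push_cast
    ring
  have hexp (s : ℝ) : HasSum (fun n : ℕ ↦ (‖w‖ * Real.exp (α * s)) ^ n / n.factorial)
      (Real.exp (‖w‖ * Real.exp (α * s))) := by
    rw [Real.exp_eq_exp_ℝ]
    exact NormedSpace.expSeries_div_hasSum_exp _
  simp_rw [hterm]
  refine hasSum_integral_of_dominated_convergence
    (fun n s ↦ Real.exp (-Real.exp s + κ * s) * ((‖w‖ * Real.exp (α * s)) ^ n / n.factorial))
    (fun n ↦ by fun_prop) (fun n ↦ ?_) ?_ ?_ ?_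
  · exact Eventually.of_forall fun s ↦ by
      simp only [norm_mul, norm_div, norm_pow, Complex.norm_real, Complex.norm_natCast,
        Real.norm_of_nonneg (Real.exp_pos _).le, le_refl]
  · exact Eventually.of_forall fun s ↦ ((hexp s).mul_left _).summable
  · simp_rw [fun s ↦ ((hexp s).mul_left (Real.exp (-Real.exp s + κ * s))).tsum_eq]
    refine (integrable_exp_neg_mul_exp_add_mul_exp hα one_pos hκ ‖w‖).congr
      (Eventually.of_forall fun s ↦ ?_)
    simp only
    rw [← Real.exp_add]
    ring_nf
  · refine Eventually.of_forall fun s ↦ ?_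
    convert! (NormedSpace.expSeries_div_hasSum_exp (w * Real.exp (α * s))).mul_left
      (Real.exp (-Real.exp s + κ * s) : ℂ) using 1
    rw [← Complex.exp_eq_exp_ℂ]
    push_cast
    rw [← Complex.exp_add]
    ring_nf

lemma inv_Gamma_one_sub (hκ : 0 < κ) :
    (Real.Gamma (1 - κ))⁻¹ = Real.Gamma κ * Real.sin (π * κ) / π := by
  have hΓ := (Real.Gamma_pos_of_pos hκ).ne'
  rw [← inv_inj, inv_inv, inv_div, ← div_div, div_right_comm, ← Real.Gamma_mul_Gamma_one_sub,
    mul_div_cancel_left₀ _ hΓ]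

end Gamma

section EntireSeries

lemma hasDerivAt_tsum_mul_pow {a : ℕ → ℝ} (ha : ∀ x, Summable fun n ↦ a n * x ^ n) (x : ℝ) :
    HasDerivAt (fun x ↦ ∑' n, a n * x ^ n) (∑' n, (n + 1) * a (n + 1) * x ^ n) x := by
  have hbound (n : ℕ) (y : ℝ) (hy : y ∈ Metric.ball 0 (|x| + 1)) :
      ‖a n * (n * y ^ (n - 1))‖ ≤ ‖a n * (2 * (|x| + 1)) ^ n‖ := by
    have hy : |y| ≤ |x| + 1 := by simpa using (Metric.mem_ball.1 hy).le
    have hn : (n : ℝ) ≤ 2 ^ n := mod_cast Nat.lt_two_pow_self.le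
    have hpow : |y| ^ (n - 1) ≤ (|x| + 1) ^ n :=
      (pow_le_pow_left₀ (abs_nonneg y) hy _).trans
        (pow_le_pow_right₀ (by linarith [abs_nonneg x]) (Nat.sub_le n 1))
    rw [norm_mul, norm_mul, norm_mul, mul_pow, norm_mul]
    simp only [norm_pow, Real.norm_eq_abs, Nat.abs_cast, Nat.abs_ofNat]
    rw [abs_of_nonneg (by positivity : 0 ≤ |x| + 1)]
    gcongr
  have hx : x ∈ Metric.ball 0 (|x| + 1) := by simp
  have hd := hasDerivAt_tsum_of_isPreconnected (ha (2 * (|x| + 1))).norm Metric.isOpen_ball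
    (convex_ball _ _).isPreconnected (fun n y _ ↦ (hasDerivAt_pow n y).const_mul (a n)) hbound
    hx (ha x) hx
  refine hd.congr_deriv ?_
  rw [Summable.tsum_eq_zero_add (.of_norm_bounded (ha (2 * (|x| + 1))).norm
    fun n ↦ hbound n x hx)]
  simp only [Nat.cast_zero, zero_mul, mul_zero, zero_add, Nat.add_sub_cancel, Nat.cast_add_one]
  congr with n
  ring

end EntireSeries

section Wright

variable {α κ : ℝ}

lemma summable_wright_of_lt_one (hα : α ∈ Ioo (0 : ℝ) 1) {b : ℝ} (hb : b < 1) (x : ℝ) :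
    Summable fun n : ℕ ↦ x ^ n / (n.factorial * Real.Gamma (b + -α * n)) := by
  have h := (hasSum_pow_div_factorial_mul_Gamma hα (sub_pos.2 hb) x).summable.norm
  refine .of_norm_bounded h fun n ↦ ?_
  have hs : 0 < α * n + (1 - b) := by
    have := hα.1
    have := sub_pos.2 hb
    positivity
  have hinv := inv_Gamma_one_sub hs
  rw [show 1 - (α * n + (1 - b)) = b + -α * n by ring] at hinv
  have hle : |Real.sin (π * (α * n + (1 - b))) / π| ≤ 1 := by
    rw [abs_div, abs_of_pos Real.pi_pos, div_le_one Real.pi_pos]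
    exact (Real.abs_sin_le_one _).trans (by linarith [Real.pi_gt_three])
  rw [← div_div, div_eq_mul_inv _ (Real.Gamma _), hinv, mul_div_assoc, ← mul_assoc, norm_mul]
  refine (mul_le_of_le_one_right (norm_nonneg _) hle).trans_eq ?_
  simp

lemma summable_wright (hα : α ∈ Ioo (0 : ℝ) 1) (b x : ℝ) :
    Summable fun n : ℕ ↦ x ^ n / (n.factorial * Real.Gamma (b + -α * n)) := by
  obtain ⟨k, hk⟩ := exists_nat_gt ((b - 1) / α)
  rw [div_lt_iff₀ hα.1] at hk
  induction k generalizing b with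
  | zero => exact summable_wright_of_lt_one hα (by simpa using hk) x
  | succ k ih =>
    have hk' : b - α - 1 < k * α := by
      push_cast at hk
      linarith
    refine (summable_nat_add_iff 1).1 (.of_norm_bounded ((ih (b - α) hk').norm.mul_left |x|) ?_)
    intro n
    have hΓ : b + -α * (n + 1 : ℕ) = b - α + -α * n := by
      push_cast
      ring
    rw [hΓ, Nat.factorial_succ, pow_succ', Nat.cast_mul, mul_assoc, mul_div_mul_comm, norm_mul]
    gcongr
    rw [norm_div, Real.norm_eq_abs]
    refine div_le_self (abs_nonneg x) ?_
    rw [Real.norm_natCast]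
    exact mod_cast Nat.le_add_left 1 n

lemma hasDerivAt_wright (hα : α ∈ Ioo (0 : ℝ) 1) (b x : ℝ) :
    HasDerivAt (wright (-α) b) (wright (-α) (b - α) x) x := by
  have hw (b : ℝ) : wright (-α) b
      = fun x ↦ ∑' n : ℕ, (n.factorial * Real.Gamma (b + -α * n))⁻¹ * x ^ n := by
    ext x
    simp only [wright, div_eq_inv_mul]
  rw [hw, hw]
  refine (hasDerivAt_tsum_mul_pow (fun x ↦ ?_) x).congr_deriv ?_
  · simpa only [div_eq_inv_mul] using summable_wright hα b x
  · congr with n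
    have hΓ : b + -α * (n + 1 : ℕ) = b - α + -α * n := by
      push_cast
      ring
    rw [hΓ, Nat.factorial_succ, Nat.cast_mul, Nat.cast_add_one]
    field_simp

lemma deriv_deriv_wright_neg (hα : α ∈ Ioo (0 : ℝ) 1) (b : ℝ) :
    deriv (deriv fun x ↦ wright (-α) b (-x)) = fun x ↦ wright (-α) (b - 2 * α) (-x) := by
  have hd (b x : ℝ) :
      HasDerivAt (fun x ↦ wright (-α) b (-x)) (-wright (-α) (b - α) (-x)) x :=
    ((hasDerivAt_wright hα b (-x)).comp x (hasDerivAt_neg x)).congr_deriv (by ring)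
  have h1 : deriv (fun x ↦ wright (-α) b (-x)) = fun x ↦ -wright (-α) (b - α) (-x) :=
    funext fun x ↦ (hd b x).deriv
  ext x
  rw [h1, (hd (b - α) x).fun_neg.deriv, neg_neg]
  ring_nf

/-- The integrand `exp (l (z - z ^ α)) z ^ κ dz / z` of the Hankel-type integral representing
the Wright function at `-l ^ (1 - α)`, in the logarithmic coordinate `z = e ^ ζ`. -/
noncomputable def wrightIntegrand (α κ l : ℝ) (ζ : ℂ) : ℂ :=
  Complex.exp (l * (Complex.exp ζ - Complex.exp (α * ζ)) + κ * ζ)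

lemma wrightIntegrand_add_pi (α κ : ℝ) {l : ℝ} (hl : 0 < l) (s : ℝ) :
    wrightIntegrand α κ l (s + π * Complex.I)
      = ((l ^ κ)⁻¹ : ℝ) * (Complex.exp (κ * π * Complex.I) *
        Complex.exp (-Real.exp (s + Real.log l)
          + (-l ^ (1 - α) : ℝ) * Complex.exp (α * π * Complex.I)
            * Real.exp (α * (s + Real.log l)) + κ * (s + Real.log l : ℝ))) := by
  have hz : Complex.exp (s + π * Complex.I) = -Real.exp s := by
    rw [Complex.exp_add, Complex.exp_pi_mul_I, Complex.ofReal_exp]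
    ring
  have hzα : Complex.exp (α * (s + π * Complex.I))
      = Complex.exp (α * π * Complex.I) * Real.exp (α * s) := by
    rw [mul_add, Complex.exp_add, Complex.ofReal_exp]
    push_cast
    ring_nf
  have hlκ : ((l ^ κ)⁻¹ : ℝ) = Real.exp (-(Real.log l * κ)) := by
    rw [Real.rpow_def_of_pos hl, Real.exp_neg]
  have hlog : Real.exp (s + Real.log l) = Real.exp s * l := by rw [Real.exp_add, Real.exp_log hl]
  have hlogα : l ^ (1 - α) * Real.exp (α * (s + Real.log l)) = l * Real.exp (α * s) := by
    rw [mul_add, Real.exp_add, mul_comm α (Real.log l), ← Real.rpow_def_of_pos hl,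
      mul_left_comm, ← Real.rpow_add hl, sub_add_cancel, Real.rpow_one, mul_comm]
  have hlogα' := congrArg Complex.ofReal hlogα
  rw [wrightIntegrand, hz, hzα, hlκ, hlog,
    Complex.ofReal_exp (-(Real.log l * κ)), ← Complex.exp_add, ← Complex.exp_add]
  congr 1
  push_cast [-Complex.ofReal_exp] at hlogα' ⊢
  linear_combination Complex.exp (α * π * Complex.I) * hlogα'

lemma im_exp_mul_pow_mul_Gamma (n : ℕ) (hn : 0 < α * n + κ) (x : ℝ) :
    (Complex.exp (κ * π * Complex.I) *
        ((x * Complex.exp (α * π * Complex.I)) ^ n / n.factorial * Real.Gamma (α * n + κ))).im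
      = π * (x ^ n / (n.factorial * Real.Gamma (1 - κ + -α * n))) := by
  have hinv := inv_Gamma_one_sub hn
  rw [show 1 - (α * n + κ) = 1 - κ + -α * n by ring] at hinv
  have hexp : Complex.exp (κ * π * Complex.I) *
        ((x * Complex.exp (α * π * Complex.I)) ^ n / n.factorial * Real.Gamma (α * n + κ))
      = (x ^ n / n.factorial * Real.Gamma (α * n + κ) : ℝ)
        * Complex.exp ((π * (α * n + κ) : ℝ) * Complex.I) := by
    rw [mul_pow, ← Complex.exp_nat_mul, show ((π * (α * n + κ) : ℝ) * Complex.I : ℂ)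
      = κ * π * Complex.I + n * (α * π * Complex.I) by push_cast; ring, Complex.exp_add]
    push_cast
    ring
  rw [hexp, Complex.im_ofReal_mul, Complex.exp_ofReal_mul_I_im, ← div_div,
    div_eq_mul_inv _ (Real.Gamma (1 - κ + -α * n)), hinv]
  field_simp

lemma im_integral_wrightIntegrand_add_pi (hα : α ∈ Ioo (0 : ℝ) 1) (hκ : 0 < κ) {l : ℝ}
    (hl : 0 < l) :
    (∫ s : ℝ, wrightIntegrand α κ l (s + π * Complex.I)).im
      = (l ^ κ)⁻¹ * (π * wright (-α) (1 - κ) (-l ^ (1 - α))) := by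
  have hsum := Complex.hasSum_im ((hasSum_pow_div_factorial_mul_Gamma hα hκ
    ((-l ^ (1 - α) : ℝ) * Complex.exp (α * π * Complex.I))).mul_left
      (Complex.exp (κ * π * Complex.I)))
  have hterm (n : ℕ) := im_exp_mul_pow_mul_Gamma (α := α) (κ := κ) n
    (by have := hα.1; positivity) (-l ^ (1 - α))
  simp_rw [wrightIntegrand_add_pi α κ hl]
  rw [integral_const_mul, integral_const_mul, integral_add_right_eq_self fun s : ℝ ↦
    Complex.exp (-Real.exp s + (-l ^ (1 - α) : ℝ) * Complex.exp (α * π * Complex.I)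
      * Real.exp (α * s) + κ * s),
    Complex.im_ofReal_mul, ← hsum.tsum_eq]
  simp_rw [hterm]
  rw [tsum_mul_left, wright]

end Wright

/-! ### Integrating along the contour -/

section LeftPrimitive

variable {F : ℂ → ℂ} {κ : ℝ}

lemma exists_norm_deriv_le_mul_exp (hF : Differentiable ℂ F) (hκ : 0 ≤ κ)
    (hbound : ∀ σ, ∃ M, ∀ ζ : ℂ, ζ.re ≤ σ → ‖F ζ‖ ≤ M * Real.exp (κ * ζ.re)) (σ : ℝ) :
    ∃ M, ∀ ζ : ℂ, ζ.re ≤ σ → ‖deriv F ζ‖ ≤ M * Real.exp (κ * ζ.re) := by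
  obtain ⟨M, hM⟩ := hbound (σ + 1)
  have hM0 : 0 ≤ M := by
    have h := (norm_nonneg _).trans (hM σ (by simp))
    exact nonneg_of_mul_nonneg_left h (Real.exp_pos _)
  refine ⟨M * Real.exp κ, fun ζ hζ ↦ ?_⟩
  have h := Complex.norm_deriv_le_of_forall_mem_sphere_norm_le (c := ζ) one_pos hF.diffContOnCl
    (C := M * Real.exp (κ * (ζ.re + 1))) fun z hz ↦ ?_
  · rwa [div_one, mul_add_one, add_comm (κ * _), Real.exp_add, ← mul_assoc] at h
  · have hre : z.re ≤ ζ.re + 1 := by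
      have := (Complex.re_le_norm (z - ζ)).trans_eq (mem_sphere_iff_norm.1 hz)
      rw [Complex.sub_re] at this
      linarith
    refine (hM z (by linarith)).trans ?_
    gcongr

lemma integrableOn_Iic_comp_add (hF : Continuous F) (hκ : 0 < κ) {M : ℝ} {ζ : ℂ}
    (hbound : ∀ z : ℂ, z.re ≤ ζ.re → ‖F z‖ ≤ M * Real.exp (κ * z.re)) :
    IntegrableOn (fun s : ℝ ↦ F (ζ + s)) (Iic 0) := by
  refine Integrable.mono' (g := fun s ↦ M * Real.exp (κ * ζ.re) * Real.exp (κ * s))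
    ((integrableOn_exp_mul_Iic hκ 0).const_mul _) (by fun_prop) ?_
  filter_upwards [ae_restrict_mem measurableSet_Iic] with s hs
  refine (hbound (ζ + s) (by simpa using hs)).trans_eq ?_
  rw [Complex.add_re, Complex.ofReal_re, mul_add, Real.exp_add, mul_assoc]

lemma tendsto_comp_add_ofReal_atBot (hκ : 0 < κ) {M : ℝ} {ζ : ℂ}
    (hbound : ∀ z : ℂ, z.re ≤ ζ.re → ‖F z‖ ≤ M * Real.exp (κ * z.re)) :
    Tendsto (fun s : ℝ ↦ F (ζ + s)) atBot (𝓝 0) := by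
  have hexp : Tendsto (fun s ↦ M * Real.exp (κ * (ζ.re + s))) atBot (𝓝 0) := by
    simpa using (Real.tendsto_exp_atBot.comp ((tendsto_atBot_add_const_left _ ζ.re
      tendsto_id).const_mul_atBot hκ)).const_mul M
  refine squeeze_zero_norm' ?_ hexp
  filter_upwards [eventually_le_atBot 0] with s hs
  simpa using hbound (ζ + s) (by simpa using hs)

lemma hasDerivAt_integral_Iic_comp_add (hF : Differentiable ℂ F) (hκ : 0 < κ)
    (hbound : ∀ σ, ∃ M, ∀ ζ : ℂ, ζ.re ≤ σ → ‖F ζ‖ ≤ M * Real.exp (κ * ζ.re)) (ζ : ℂ) :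
    HasDerivAt (fun ζ ↦ ∫ s in Iic (0 : ℝ), F (ζ + s)) (F ζ) ζ := by
  obtain ⟨M, hM⟩ := hbound ζ.re
  obtain ⟨M', hM'⟩ := exists_norm_deriv_le_mul_exp hF hκ.le hbound (ζ.re + 1)
  have hF' : Continuous (deriv F) := hF.contDiff.continuous_deriv le_rfl
  have hd := hasDerivAt_integral_of_dominated_loc_of_deriv_le (μ := volume.restrict (Iic (0 : ℝ)))
    (F := fun ζ s ↦ F (ζ + s)) (F' := fun ζ s ↦ deriv F (ζ + s)) (x₀ := ζ)
    (bound := fun s ↦ |M'| * Real.exp (κ * (ζ.re + 1)) * Real.exp (κ * s))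
    (Metric.ball_mem_nhds ζ one_pos)
    (Eventually.of_forall fun z ↦ (hF.continuous.comp (by fun_prop)).aestronglyMeasurable)
    (integrableOn_Iic_comp_add hF.continuous hκ hM)
    (hF'.comp (by fun_prop)).aestronglyMeasurable ?_
    ((integrableOn_exp_mul_Iic hκ 0).const_mul _)
    (Eventually.of_forall fun s z _ ↦ (hF (z + s)).hasDerivAt.comp_add_const z s)
  · refine hd.2.congr_deriv ?_
    have hderiv (s : ℝ) : HasDerivAt (fun s : ℝ ↦ F (ζ + s)) (deriv F (ζ + s)) s :=
      ((hF (ζ + s)).hasDerivAt.comp_const_add ζ s).comp_ofReal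
    rw [integral_Iic_of_hasDerivAt_of_tendsto' (fun s _ ↦ hderiv s) hd.1
      (tendsto_comp_add_ofReal_atBot hκ hM)]
    simp
  · filter_upwards [ae_restrict_mem measurableSet_Iic] with s hs z hz
    have hre : z.re ≤ ζ.re + 1 := by
      have := (Complex.re_le_norm (z - ζ)).trans (mem_ball_iff_norm.1 hz).le
      rw [Complex.sub_re] at this
      linarith
    have hs : s ≤ 0 := hs
    refine (hM' (z + s) (by simp; linarith)).trans ?_
    rw [mul_assoc, ← Real.exp_add, ← mul_add, Complex.add_re, Complex.ofReal_re]
    gcongr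
    exact le_abs_self M'

lemma integral_Iic_zero_comp_add (F : ℂ → ℂ) (σ ψ : ℝ) :
    ∫ s in Iic (0 : ℝ), F (σ + ψ * Complex.I + s)
      = ∫ s : ℝ, (Iic σ).indicator (fun s : ℝ ↦ F (s + ψ * Complex.I)) s := by
  rw [← integral_indicator measurableSet_Iic, ← integral_add_right_eq_self
    ((Iic σ).indicator fun s : ℝ ↦ F (s + ψ * Complex.I)) σ]
  congr with s
  simp only [indicator, mem_Iic, add_le_iff_nonpos_left]
  push_cast
  ring_nf

end LeftPrimitive

section WrightPrimitive

variable {α κ l ψ : ℝ}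

lemma norm_wrightIntegrand (α κ l : ℝ) (ζ : ℂ) :
    ‖wrightIntegrand α κ l ζ‖ = Real.exp (l * (Real.exp ζ.re * Real.cos ζ.im
      - Real.exp (α * ζ.re) * Real.cos (α * ζ.im)) + κ * ζ.re) := by
  rw [wrightIntegrand, Complex.norm_exp, Complex.add_re, Complex.re_ofReal_mul, Complex.sub_re,
    Complex.exp_re, Complex.exp_re, Complex.re_ofReal_mul, Complex.re_ofReal_mul,
    Complex.im_ofReal_mul]

lemma differentiable_wrightIntegrand (α κ l : ℝ) : Differentiable ℂ (wrightIntegrand α κ l) := by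
  unfold wrightIntegrand
  fun_prop

lemma exists_norm_wrightIntegrand_le (hα : 0 ≤ α) (hl : 0 ≤ l) (σ : ℝ) :
    ∃ M, ∀ ζ : ℂ, ζ.re ≤ σ → ‖wrightIntegrand α κ l ζ‖ ≤ M * Real.exp (κ * ζ.re) := by
  refine ⟨Real.exp (l * (Real.exp σ + Real.exp (α * σ))), fun ζ hζ ↦ ?_⟩
  rw [norm_wrightIntegrand, Real.exp_add]
  gcongr
  rw [sub_eq_add_neg, ← mul_neg]
  refine add_le_add ?_ ?_
  · exact (mul_le_of_le_one_right (Real.exp_pos _).le (Real.cos_le_one _)).trans (by gcongr)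
  · exact (mul_le_of_le_one_right (Real.exp_pos _).le
      (neg_le.1 (Real.neg_one_le_cos _))).trans (by gcongr)

/-- The primitive of `wrightIntegrand α κ l` that vanishes as `re ζ → -∞`. -/
noncomputable def wrightPrimitive (α κ l : ℝ) (ζ : ℂ) : ℂ :=
  ∫ s in Iic (0 : ℝ), wrightIntegrand α κ l (ζ + s)

lemma hasDerivAt_wrightPrimitive (hα : 0 ≤ α) (hκ : 0 < κ) (hl : 0 ≤ l) (ζ : ℂ) :
    HasDerivAt (wrightPrimitive α κ l) (wrightIntegrand α κ l ζ) ζ :=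
  hasDerivAt_integral_Iic_comp_add (differentiable_wrightIntegrand α κ l) hκ
    (exists_norm_wrightIntegrand_le hα hl) ζ

lemma im_wrightPrimitive_ofReal (α κ l σ : ℝ) : (wrightPrimitive α κ l σ).im = 0 := by
  have h (s : ℝ) : wrightIntegrand α κ l (σ + s) = (Real.exp
      (l * (Real.exp (σ + s) - Real.exp (α * (σ + s))) + κ * (σ + s)) : ℝ) := by
    rw [wrightIntegrand]
    push_cast
    rfl
  simp_rw [wrightPrimitive, h]
  rw [integral_complex_ofReal, Complex.ofReal_im]

lemma norm_wrightIntegrand_le_of_cos_le (hl : 0 ≤ l) (hψ : Real.cos ψ ≤ -(1 / 2)) (s : ℝ) :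
    ‖wrightIntegrand α κ l (s + ψ * Complex.I)‖
      ≤ Real.exp (-(l / 2) * Real.exp s + l * Real.exp (α * s) + κ * s) := by
  have h1 := mul_le_mul_of_nonneg_left hψ (Real.exp_pos s).le
  have h2 := mul_le_mul_of_nonneg_left (Real.neg_one_le_cos (α * ψ)) (Real.exp_pos (α * s)).le
  have h3 : l * (Real.exp s * Real.cos ψ - Real.exp (α * s) * Real.cos (α * ψ))
      ≤ l * (Real.exp s * -(1 / 2) - Real.exp (α * s) * -1) := by
    gcongr
  rw [norm_wrightIntegrand, Real.exp_le_exp]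
  simp only [Complex.add_re, Complex.ofReal_re, Complex.re_ofReal_mul, Complex.I_re, mul_zero,
    add_zero, Complex.add_im, Complex.ofReal_im, Complex.im_ofReal_mul, Complex.I_im, mul_one,
    zero_add]
  linarith

lemma tendsto_wrightPrimitive_pi (hα : α ∈ Ioo (0 : ℝ) 1) (hκ : 0 < κ) (hl : 0 < l)
    {σ : ℝ → ℝ} (hσ : Tendsto σ (𝓝[<] π) atTop) :
    Tendsto (fun ψ : ℝ ↦ wrightPrimitive α κ l (σ ψ + ψ * Complex.I)) (𝓝[<] π)
      (𝓝 (∫ s : ℝ, wrightIntegrand α κ l (s + π * Complex.I))) := by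
  have hcont : Continuous (wrightIntegrand α κ l) :=
    (differentiable_wrightIntegrand α κ l).continuous
  simp_rw [wrightPrimitive, integral_Iic_zero_comp_add (wrightIntegrand α κ l)]
  refine tendsto_integral_filter_of_dominated_convergence _
    (Eventually.of_forall fun ψ ↦ ?_) ?_
    (integrable_exp_neg_mul_exp_add_mul_exp hα (half_pos hl) hκ l)
    (Eventually.of_forall fun s ↦ ?_)
  · exact ((hcont.comp (by fun_prop)).measurable.indicator measurableSet_Iic).aestronglyMeasurable
  · have hcos : ∀ᶠ ψ in 𝓝[<] π, Real.cos ψ < -(1 / 2) :=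
      nhdsWithin_le_nhds <| Real.continuous_cos.continuousAt.eventually_lt_const (by norm_num)
    filter_upwards [hcos] with ψ hψ
    exact Eventually.of_forall fun s ↦ (norm_indicator_le_norm_self _ _).trans
      (norm_wrightIntegrand_le_of_cos_le hl.le hψ.le s)
  · have hlim : Tendsto (fun ψ : ℝ ↦ wrightIntegrand α κ l (s + ψ * Complex.I)) (𝓝[<] π)
        (𝓝 (wrightIntegrand α κ l (s + π * Complex.I))) :=
      ((hcont.comp (by fun_prop)).tendsto π).mono_left nhdsWithin_le_nhds
    refine hlim.congr' ?_
    filter_upwards [hσ.eventually_ge_atTop s] with ψ hψ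
    rw [indicator_of_mem (mem_Iic.2 hψ)]

end WrightPrimitive

section ContourIntegral

variable {α κ l ψ : ℝ}

/-- Imaginary part of the integral of `wrightIntegrand α κ l` along the contour
`ζ = log R + iθ` up to the angle `θ = ψ`. -/
noncomputable def contourIntegral (α κ l ψ : ℝ) : ℝ :=
  (wrightPrimitive α κ l (Real.log (contourRadius α ψ) + ψ * Complex.I)).im

lemma wrightIntegrand_contour (hα : α ∈ Ioo (0 : ℝ) 1) (hψ : ψ ∈ Ioo 0 π) :
    wrightIntegrand α κ l (Real.log (contourRadius α ψ) + ψ * Complex.I)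
      = (Real.exp (-l * contourDecay α ψ) * contourRadius α ψ ^ κ : ℝ)
        * Complex.exp ((κ * ψ : ℝ) * Complex.I) := by
  have hR := contourRadius_pos hα hψ
  have hz : Complex.exp (Real.log (contourRadius α ψ) + ψ * Complex.I)
      = contourRadius α ψ * Complex.exp (ψ * Complex.I) := by
    rw [Complex.exp_add, ← Complex.ofReal_exp, Real.exp_log hR]
  have hpow (c : ℝ) : Complex.exp (c * (Real.log (contourRadius α ψ) + ψ * Complex.I))
      = (contourRadius α ψ ^ c : ℝ) * Complex.exp ((c * ψ : ℝ) * Complex.I) := by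
    rw [mul_add, Complex.exp_add, ← Complex.ofReal_mul, ← Complex.ofReal_exp, mul_comm c,
      ← Real.rpow_def_of_pos hR, Complex.ofReal_mul c, mul_assoc]
  rw [wrightIntegrand, Complex.exp_add, hz, hpow, hpow, contourRadius_mul_exp_sub hα hψ, mul_neg,
    ← neg_mul, ← mul_assoc]
  push_cast
  rfl

lemma hasDerivAt_contourIntegral (hα : α ∈ Ioo (0 : ℝ) 1) (hκ : 0 < κ) (hl : 0 ≤ l)
    (hψ : ψ ∈ Ioo 0 π) :
    HasDerivAt (contourIntegral α κ l)
      (Real.exp (-l * contourDecay α ψ) * contourRadius α ψ ^ κ * contourWeight α κ ψ) ψ := by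
  have hR := contourRadius_pos hα hψ
  have hlog : HasDerivAt (fun ψ ↦ Real.log (contourRadius α ψ)) (contourSlope α ψ) ψ :=
    ((hasDerivAt_contourRadius hα hψ).log hR.ne').congr_deriv (mul_div_cancel_left₀ _ hR.ne')
  have hcurve : HasDerivAt (fun ψ : ℝ ↦ (Real.log (contourRadius α ψ) + ψ * Complex.I : ℂ))
      (contourSlope α ψ + Complex.I) ψ := by
    simpa using hlog.ofReal_comp.fun_add ((hasDerivAt_id ψ).ofReal_comp.mul_const Complex.I)
  have h := Complex.imCLM.hasFDerivAt.comp_hasDerivAt ψ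
    ((hasDerivAt_wrightPrimitive hα.1.le hκ hl _).comp ψ hcurve)
  refine h.congr_deriv ?_
  rw [wrightIntegrand_contour hα hψ, mul_assoc, Complex.imCLM_apply, Complex.im_ofReal_mul,
    contourWeight, Complex.mul_im, Complex.exp_ofReal_mul_I_re, Complex.exp_ofReal_mul_I_im]
  simp only [Complex.add_re, Complex.add_im, Complex.ofReal_re, Complex.ofReal_im, Complex.I_re,
    Complex.I_im]
  ring

lemma tendsto_contourIntegral_zero (hα : 0 < α) (hκ : 0 < κ) (hl : 0 ≤ l) :
    Tendsto (contourIntegral α κ l) (𝓝[>] 0) (𝓝 0) := by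
  have hcont : Continuous (wrightPrimitive α κ l) :=
    continuous_iff_continuousAt.2 fun ζ ↦ (hasDerivAt_wrightPrimitive hα.le hκ hl ζ).continuousAt
  have hlog := (tendsto_contourRadius_zero hα).log (Real.rpow_pos_of_pos hα _).ne'
  have hψ : Tendsto (fun ψ : ℝ ↦ ψ * Complex.I) (𝓝[>] 0) (𝓝 0) := by
    have h : Continuous fun ψ : ℝ ↦ ψ * Complex.I := by fun_prop
    simpa using (h.tendsto 0).mono_left nhdsWithin_le_nhds
  have hcurve := (hlog.ofReal).add hψ
  rw [add_zero] at hcurve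
  have h := (Complex.continuous_im.comp hcont).continuousAt.tendsto.comp hcurve
  rwa [Function.comp_apply, im_wrightPrimitive_ofReal] at h

lemma tendsto_contourIntegral_pi (hα : α ∈ Ioo (0 : ℝ) 1) (hκ : 0 < κ) (hl : 0 < l) :
    Tendsto (contourIntegral α κ l) (𝓝[<] π)
      (𝓝 ((l ^ κ)⁻¹ * (π * wright (-α) (1 - κ) (-l ^ (1 - α))))) := by
  rw [← im_integral_wrightIntegrand_add_pi hα hκ hl]
  exact (Complex.continuous_im.tendsto _).comp (tendsto_wrightPrimitive_pi hα hκ hl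
    (Real.tendsto_log_atTop.comp (tendsto_contourRadius_pi hα)))

end ContourIntegral

/-! ### Sign changes and inflection points -/

section SignChanges

variable {α κ : ℝ}

lemma le_of_monotoneOn_Ioo_of_tendsto {f : ℝ → ℝ} {a b u v : ℝ} (hab : a < b)
    (hf : MonotoneOn f (Ioo a b)) (hu : Tendsto f (𝓝[>] a) (𝓝 u))
    (hv : Tendsto f (𝓝[<] b) (𝓝 v)) : u ≤ v := by
  obtain ⟨x, hx⟩ := exists_between hab
  have hux : u ≤ f x := le_of_tendsto hu <| by
    filter_upwards [Ioo_mem_nhdsGT hx.1] with y hy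
    exact hf ⟨hy.1, hy.2.trans hx.2⟩ hx hy.2.le
  have hxv : f x ≤ v := ge_of_tendsto hv <| by
    filter_upwards [Ioo_mem_nhdsLT hx.2] with y hy
    exact hf hx ⟨hx.1.trans hy.1, hy.2⟩ hy.1.le
  exact hux.trans hxv

lemma exists_add_mul_exp_add_exp_sign (hα : α ∈ Ioo (0 : ℝ) 1) {N : Set ℝ}
    (hN : N ⊆ Ioo 0 π) (hN' : N.OrdConnected) {l₁ l₂ l₃ : ℝ} (h₁₂ : l₁ < l₂) (h₂₃ : l₂ < l₃) :
    ∃ c₁ c₂ : ℝ, 0 ≤ c₁ ∧ c₂ ≤ 0 ∧ ∀ ψ ∈ Ioo 0 π,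
      (ψ ∈ N → c₁ * Real.exp (-l₁ * contourDecay α ψ) + c₂ * Real.exp (-l₂ * contourDecay α ψ)
        + Real.exp (-l₃ * contourDecay α ψ) ≤ 0) ∧
      (ψ ∉ N → 0 ≤ c₁ * Real.exp (-l₁ * contourDecay α ψ)
        + c₂ * Real.exp (-l₂ * contourDecay α ψ) + Real.exp (-l₃ * contourDecay α ψ)) := by
  have hd : 0 < l₂ - l₁ := sub_pos.2 h₁₂
  set v : ℝ → ℝ := fun ψ ↦ Real.exp (-(l₂ - l₁) * contourDecay α ψ)
  have hv : AntitoneOn v (Ioo 0 π) := fun s hs t ht hst ↦ Real.exp_le_exp.2 <|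
    mul_le_mul_of_nonpos_left (monotoneOn_contourDecay hα hs ht hst) (neg_nonpos.2 hd.le)
  have hbdd : BddAbove (v '' Ioo 0 π) := ⟨1, forall_mem_image.2 fun ψ hψ ↦ Real.exp_le_one_iff.2 <|
    mul_nonpos_of_nonpos_of_nonneg (neg_nonpos.2 hd.le) (contourDecay_pos hα hψ).le⟩
  obtain ⟨c₁, c₂, hc₁, hc₂, hin, hout⟩ := exists_add_mul_add_rpow_sign_of_antitoneOn
    ((one_lt_div hd).2 (sub_lt_sub_right h₂₃ l₁)) hv (fun _ _ ↦ (Real.exp_pos _).le) hbdd hN hN'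
  have hfactor (ψ : ℝ) :
      c₁ * Real.exp (-l₁ * contourDecay α ψ) + c₂ * Real.exp (-l₂ * contourDecay α ψ)
          + Real.exp (-l₃ * contourDecay α ψ)
        = Real.exp (-l₁ * contourDecay α ψ)
          * (c₁ + c₂ * v ψ + v ψ ^ ((l₃ - l₁) / (l₂ - l₁))) := by
    have hexponent : -(l₂ - l₁) * contourDecay α ψ * ((l₃ - l₁) / (l₂ - l₁))
        = -(l₃ - l₁) * contourDecay α ψ := by
      field_simp
    rw [← Real.exp_mul, hexponent, mul_add, mul_add, mul_left_comm, ← Real.exp_add,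
      ← Real.exp_add]
    ring_nf
  refine ⟨c₁, c₂, hc₁, hc₂, fun ψ hψ ↦ ?_⟩
  rw [hfactor]
  exact ⟨fun h ↦ mul_nonpos_of_nonneg_of_nonpos (Real.exp_pos _).le (hin ψ h),
    fun h ↦ mul_nonneg (Real.exp_pos _).le (hout ψ hψ h)⟩

lemma exists_monotoneOn_add_mul_contourIntegral (hα : α ∈ Ioo (0 : ℝ) 1)
    (hκ : κ ∈ Icc (1 : ℝ) 3) {l₁ l₂ l₃ : ℝ} (h₁ : 0 ≤ l₁) (h₁₂ : l₁ < l₂) (h₂₃ : l₂ < l₃) :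
    ∃ c₁ c₂ : ℝ, 0 ≤ c₁ ∧ c₂ ≤ 0 ∧ MonotoneOn (fun ψ ↦ c₁ * contourIntegral α κ l₁ ψ
      + c₂ * contourIntegral α κ l₂ ψ + contourIntegral α κ l₃ ψ) (Ioo 0 π) := by
  have h₂ := h₁.trans h₁₂.le
  have hκ0 : 0 < κ := one_pos.trans_le hκ.1
  obtain ⟨c₁, c₂, hc₁, hc₂, hsign⟩ := exists_add_mul_exp_add_exp_sign hα
    (N := {ψ ∈ Ioo 0 π | contourWeight α κ ψ < 0}) (sep_subset _ _)
    (ordConnected_contourWeight_neg hα hκ) h₁₂ h₂₃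
  have hderiv (ψ : ℝ) (hψ : ψ ∈ Ioo 0 π) : HasDerivAt (fun ψ ↦ c₁ * contourIntegral α κ l₁ ψ
        + c₂ * contourIntegral α κ l₂ ψ + contourIntegral α κ l₃ ψ)
      (contourRadius α ψ ^ κ * ((c₁ * Real.exp (-l₁ * contourDecay α ψ)
        + c₂ * Real.exp (-l₂ * contourDecay α ψ) + Real.exp (-l₃ * contourDecay α ψ))
          * contourWeight α κ ψ)) ψ :=
    ((((hasDerivAt_contourIntegral hα hκ0 h₁ hψ).const_mul c₁).add
      ((hasDerivAt_contourIntegral hα hκ0 h₂ hψ).const_mul c₂)).add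
      (hasDerivAt_contourIntegral hα hκ0 (h₂.trans h₂₃.le) hψ)).congr_deriv (by ring)
  refine ⟨c₁, c₂, hc₁, hc₂, monotoneOn_of_hasDerivWithinAt_nonneg (convex_Ioo _ _)
    (fun ψ hψ ↦ (hderiv ψ hψ).continuousAt.continuousWithinAt)
    (fun ψ hψ ↦ (hderiv ψ (interior_subset hψ)).hasDerivWithinAt) fun ψ hψ ↦ ?_⟩
  replace hψ := interior_subset hψ
  refine mul_nonneg (Real.rpow_nonneg (contourRadius_pos hα hψ).le _) ?_
  by_cases hE : contourWeight α κ ψ < 0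
  · exact mul_nonneg_of_nonpos_of_nonpos ((hsign ψ hψ).1 ⟨hψ, hE⟩) hE.le
  · exact mul_nonneg ((hsign ψ hψ).2 fun h ↦ hE h.2) (not_lt.1 hE)

lemma exists_nonneg_add_mul_wright_rpow (hα : α ∈ Ioo (0 : ℝ) 1) (hκ : κ ∈ Icc (1 : ℝ) 3)
    {l₁ l₂ l₃ : ℝ} (h₁ : 0 < l₁) (h₁₂ : l₁ < l₂) (h₂₃ : l₂ < l₃) :
    ∃ c₁ c₂ c₃ : ℝ, 0 ≤ c₁ ∧ c₂ ≤ 0 ∧ 0 < c₃ ∧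
      0 ≤ c₁ * wright (-α) (1 - κ) (-l₁ ^ (1 - α)) + c₂ * wright (-α) (1 - κ) (-l₂ ^ (1 - α))
        + c₃ * wright (-α) (1 - κ) (-l₃ ^ (1 - α)) := by
  have h₂ := h₁.trans h₁₂
  have h₃ := h₂.trans h₂₃
  have hκ0 : 0 < κ := one_pos.trans_le hκ.1
  obtain ⟨c₁, c₂, hc₁, hc₂, hmono⟩ :=
    exists_monotoneOn_add_mul_contourIntegral hα hκ h₁.le h₁₂ h₂₃
  have h := le_of_monotoneOn_Ioo_of_tendsto Real.pi_pos hmono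
    ((((tendsto_contourIntegral_zero hα.1 hκ0 h₁.le).const_mul c₁).add
      ((tendsto_contourIntegral_zero hα.1 hκ0 h₂.le).const_mul c₂)).add
      (tendsto_contourIntegral_zero hα.1 hκ0 h₃.le))
    ((((tendsto_contourIntegral_pi hα hκ0 h₁).const_mul c₁).add
      ((tendsto_contourIntegral_pi hα hκ0 h₂).const_mul c₂)).add
      (tendsto_contourIntegral_pi hα hκ0 h₃))
  refine ⟨c₁ * ((l₁ ^ κ)⁻¹ * π), c₂ * ((l₂ ^ κ)⁻¹ * π), (l₃ ^ κ)⁻¹ * π, by positivity,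
    mul_nonpos_of_nonpos_of_nonneg hc₂ (by positivity), by positivity, ?_⟩
  linarith

lemma not_wright_neg_pos_neg (hα : α ∈ Ioo (0 : ℝ) 1) {b : ℝ} (hb : b ∈ Icc (-2 : ℝ) 0)
    {x₁ x₂ x₃ : ℝ} (h₁ : 0 < x₁) (h₁₂ : x₁ < x₂) (h₂₃ : x₂ < x₃) :
    ¬(wright (-α) b (-x₁) < 0 ∧ 0 < wright (-α) b (-x₂) ∧ wright (-α) b (-x₃) < 0) := by
  rintro ⟨hw₁, hw₂, hw₃⟩
  have hα' : 0 < 1 - α := sub_pos.2 hα.2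
  have hpow {x : ℝ} (hx : 0 < x) : (x ^ (1 - α)⁻¹) ^ (1 - α) = x :=
    Real.rpow_inv_rpow hx.le hα'.ne'
  have h₂ := h₁.trans h₁₂
  obtain ⟨c₁, c₂, c₃, hc₁, hc₂, hc₃, h⟩ := exists_nonneg_add_mul_wright_rpow (κ := 1 - b) hα
    ⟨by linarith [hb.2], by linarith [hb.1]⟩ (Real.rpow_pos_of_pos h₁ (1 - α)⁻¹)
    (Real.rpow_lt_rpow h₁.le h₁₂ (inv_pos.2 hα')) (Real.rpow_lt_rpow h₂.le h₂₃ (inv_pos.2 hα'))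
  rw [hpow h₁, hpow h₂, hpow (h₂.trans h₂₃), sub_sub_cancel] at h
  linarith [mul_nonpos_of_nonneg_of_nonpos hc₁ hw₁.le,
    mul_nonpos_of_nonpos_of_nonneg hc₂ hw₂.le, mul_neg_of_pos_of_neg hc₃ hw₃]

lemma frequently_deriv_deriv_neg_and_pos {f : ℝ → ℝ} {x : ℝ} (hf : IsInflectionPoint f x) :
    (∃ᶠ y in 𝓝 x, deriv (deriv f) y < 0) ∧ ∃ᶠ y in 𝓝 x, 0 < deriv (deriv f) y := by
  have hleft {p : ℝ → Prop} {ε : ℝ} (hε : 0 < ε) (hp : ∀ y ∈ Ioo (x - ε) x, p y) :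
      ∃ᶠ y in 𝓝 x, p y :=
    (eventually_of_mem (Ioo_mem_nhdsLT (sub_lt_self x hε)) hp).frequently.filter_mono
      nhdsWithin_le_nhds
  have hright {p : ℝ → Prop} {ε : ℝ} (hε : 0 < ε) (hp : ∀ y ∈ Ioo x (x + ε), p y) :
      ∃ᶠ y in 𝓝 x, p y :=
    (eventually_of_mem (Ioo_mem_nhdsGT (lt_add_of_pos_right x hε)) hp).frequently.filter_mono
      nhdsWithin_le_nhds
  obtain ⟨ε, hε, ⟨hneg, hpos⟩ | ⟨hpos, hneg⟩⟩ := hf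
  · exact ⟨hleft hε hneg, hright hε hpos⟩
  · exact ⟨hright hε hneg, hleft hε hpos⟩

end SignChanges

end WrightInflection

open WrightInflection in
theorem wright_at_most_two_inflection_points_general {α β : ℝ} (hα : α ∈ Set.Ioo (0 : ℝ) 1)
    (hβ : β ∈ Set.Icc (2 * α - 2) (2 * α)) :
    ¬ ∃ x₁ x₂ x₃ : ℝ, 0 < x₁ ∧ x₁ < x₂ ∧ x₂ < x₃ ∧
        IsInflectionPoint (fun x ↦ wright (-α) β (-x)) x₁ ∧
        IsInflectionPoint (fun x ↦ wright (-α) β (-x)) x₂ ∧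
        IsInflectionPoint (fun x ↦ wright (-α) β (-x)) x₃ := by
  rintro ⟨x₁, x₂, x₃, h₁, h₁₂, h₂₃, hf₁, hf₂, hf₃⟩
  obtain ⟨u, h₁u, hu₂⟩ := exists_between h₁₂
  obtain ⟨v, h₂v, hv₃⟩ := exists_between h₂₃
  obtain ⟨y₁, hw₁, hy₁⟩ := ((frequently_deriv_deriv_neg_and_pos hf₁).1.and_eventually
    (Ioo_mem_nhds h₁ h₁u)).exists
  obtain ⟨y₂, hw₂, hy₂⟩ := ((frequently_deriv_deriv_neg_and_pos hf₂).2.and_eventually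
    (Ioo_mem_nhds hu₂ h₂v)).exists
  obtain ⟨y₃, hw₃, hy₃⟩ := ((frequently_deriv_deriv_neg_and_pos hf₃).1.and_eventually
    (Ioi_mem_nhds hv₃)).exists
  rw [deriv_deriv_wright_neg hα] at hw₁ hw₂ hw₃
  exact not_wright_neg_pos_neg hα ⟨by linarith [hβ.1], by linarith [hβ.2]⟩ hy₁.1
    (hy₁.2.trans hy₂.1) (hy₂.2.trans hy₃) ⟨hw₁, hw₂, hw₃⟩

/-- Lemma 2: for `α ∈ [1/2, 1)` and `β ∈ [0, α]`, the function `x ↦ φ(-α, β, -x)`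
has at most two inflection points in `(0,∞)`. -/
theorem wright_at_most_two_inflection_points (α β : ℝ)
    (hα : α ∈ Set.Ico (1/2 : ℝ) 1) (hβ : β ∈ Set.Icc (0 : ℝ) α) :
    ¬ ∃ x₁ x₂ x₃ : ℝ, 0 < x₁ ∧ x₁ < x₂ ∧ x₂ < x₃ ∧
        IsInflectionPoint (fun x => wright (-α) β (-x)) x₁ ∧
        IsInflectionPoint (fun x => wright (-α) β (-x)) x₂ ∧
        IsInflectionPoint (fun x => wright (-α) β (-x)) x₃ :=
  wright_at_most_two_inflection_points_general ⟨by linarith [hα.1], hα.2⟩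
    ⟨by linarith [hα.2, hβ.1], by linarith [hα.1, hβ.2]⟩
end
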